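/- arXiv:q-alg/9507029 — 3 statements merged into one kernel-verified Lean document; each statement's English description precedes it below -/
import Mathlib

section
/- Uniqueness of irreducible highest weight modules: Let V_1 and V_2 be irreducible Y(gl(M|N))-modules each containing a maximal vector of the same weight Λ = (λ_a[n])_{1≤a≤M+N, n≥1}. Then V_1 and V_2 are isomorphic as Y(gl(M|N))-modules. -/
/-!
The Yangian is filtered by giving `t^a_b[n]` degree `n`, and every term on the right of a defining
relation has degree at most `m + n - 1`; hence generators commute up to a scalar modulo lower
degree (`tg_mul_tg`, `tg_mul_word`). In a word applied to a maximal vector `v`, a generator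
`t^a_b[n]` with `a ≤ b` can therefore be moved to the far right, where it acts on `v` by a scalar,
at the cost of words of smaller degree. By induction on the degree, `Y v` is spanned by words in the
lowering generators (`a > b`) applied to `v`.

The element `hgr = -∑ a t^a_a[1]` satisfies `[hgr, t^b_c[n]] = (c - b) t^b_c[n]`, so nonempty lowering
words applied to `v` are eigenvectors of `hgr` with eigenvalue different from that of `v`.
Consequently the eigenspace of `hgr` in `Y v` containing `v` is the line `ℂ v`
(`eq_smul_of_mem_eigenspace`).

In `V₁ × V₂` the pair `(v₁, v₂)` is again maximal of weight `Λ`. If `y` killed `v₁` but not `v₂`,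
irreducibility of `V₂` would put `(0, v₂)` in `Y (v₁, v₂)`, and it would be a multiple of
`(v₁, v₂)`, which is absurd. So `v₁` and `v₂` have the same annihilator, and both modules are the
quotient of `Y` by it.
-/

open scoped BigOperators TensorProduct

namespace SY

/-- The parity `[a]` of an index: `0` if `a ≤ M` (1-based), `1` otherwise.  Indices are 0-based
`Fin (M+N)`, so `[a] = 0` iff `a < M`. -/
def pa (M : ℕ) {k : ℕ} (a : Fin k) : ℕ := if (a : ℕ) < M then 0 else 1

/-- Index type for the generators of the super Yangian: `(a, b, k)` encodes `t^a_b[k+1]`. -/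
abbrev Gen (M N : ℕ) := Fin (M + N) × Fin (M + N) × ℕ

/-- The free algebra on the generators. -/
abbrev F (M N : ℕ) := FreeAlgebra ℂ (Gen M N)

/-- `T M N a b n` is the free-algebra element corresponding to `t^a_b[n]` (`n ≥ 1`). -/
noncomputable def T (M N : ℕ) (a b : Fin (M + N)) (n : ℕ) : F M N :=
  FreeAlgebra.ι ℂ ((a, b, n - 1) : Gen M N)

noncomputable def sgn1 (M : ℕ) {k : ℕ} (a1 b1 a2 b2 : Fin k) : ℂ :=
  (-1 : ℂ) ^ ((pa M a1 + pa M b1) * (pa M a2 + pa M b2))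

noncomputable def sgn2 (M : ℕ) {k : ℕ} (a1 b1 a2 : Fin k) : ℂ :=
  (-1 : ℂ) ^ (pa M a1 * pa M a2 + pa M b1 * (pa M a1 + pa M a2))

/-- The defining relations of the super Yangian `Y(gl(M|N))`. -/
inductive Rel (M N : ℕ) : F M N → F M N → Prop
  | defining (a1 b1 a2 b2 : Fin (M + N)) (m n : ℕ) (hm : 1 ≤ m) (hn : 1 ≤ n) :
      Rel M N
        (T M N a1 b1 m * T M N a2 b2 n - sgn1 M a1 b1 a2 b2 • (T M N a2 b2 n * T M N a1 b1 m))
        ((if b1 = a2 then T M N a1 b2 (m + n - 1) else 0)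
          - sgn1 M a1 b1 a2 b2 • (if b2 = a1 then T M N a2 b1 (m + n - 1) else 0)
          + sgn2 M a1 b1 a2 •
              ∑ r ∈ Finset.Ico 1 (min m n),
                (T M N a2 b1 r * T M N a1 b2 (m + n - 1 - r)
                  - T M N a2 b1 (m + n - 1 - r) * T M N a1 b2 r))

/-- The super Yangian `Y(gl(M|N))` as the quotient of the free algebra by the defining
relations. -/
abbrev Y (M N : ℕ) := RingQuot (Rel M N)

/-- The generator `t^a_b[n]` of `Y(gl(M|N))` (for `n ≥ 1`). -/
noncomputable def t (M N : ℕ) (a b : Fin (M + N)) (n : ℕ) : Y M N :=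
  RingQuot.mkAlgHom ℂ (Rel M N) (T M N a b n)

/-- The generator of `Y(gl(M|N))` indexed by `g : Gen M N`, i.e. `t^a_b[k+1]` for
`g = (a,b,k)`. -/
noncomputable def tg (M N : ℕ) (g : Gen M N) : Y M N :=
  RingQuot.mkAlgHom ℂ (Rel M N) (FreeAlgebra.ι ℂ g)

/-- `g` indexes an odd generator iff `[a]+[b]` is odd. -/
abbrev oddG (M N : ℕ) (g : Gen M N) : Prop := (pa M g.1 + pa M g.2.1) % 2 = 1

/-- A representation of `Y(gl(M|N))` is irreducible if the space is nonzero and the only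
invariant subspaces are `⊥` and `⊤`. -/
def IsIrreducibleRep (M N : ℕ) {V : Type*} [AddCommGroup V] [Module ℂ V]
    (ρ : Y M N →ₐ[ℂ] Module.End ℂ V) : Prop :=
  (∃ v : V, v ≠ 0) ∧
    ∀ W : Submodule ℂ V, (∀ y : Y M N, ∀ w ∈ W, ρ y w ∈ W) → W = ⊥ ∨ W = ⊤

/-- `v` is a maximal vector of weight `Λ = (λ_a[n])`. -/
def IsMaximalVec (M N : ℕ) {V : Type*} [AddCommGroup V] [Module ℂ V]
    (ρ : Y M N →ₐ[ℂ] Module.End ℂ V) (v : V) (Λ : Fin (M + N) → ℕ → ℂ) : Prop :=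
  v ≠ 0 ∧
    (∀ a b : Fin (M + N), a < b → ∀ n : ℕ, 1 ≤ n → ρ (t M N a b n) v = 0) ∧
    (∀ (a : Fin (M + N)) (n : ℕ), 1 ≤ n → ρ (t M N a a n) v = Λ a n • v)


/-! ### The degree filtration -/

/-- The degree of the word `l`, where `t^a_b[n]` has degree `n`. -/
def deg {M N : ℕ} (l : List (Gen M N)) : ℕ := (l.map fun g => g.2.2 + 1).sum

/-- The product in `Y(gl(M|N))` of the generators in a word. -/
noncomputable def word {M N : ℕ} (l : List (Gen M N)) : Y M N := (l.map (tg M N)).prod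

/-- The span of the words of degree strictly less than `d`. The strict inequality avoids
truncated subtraction in the statements about lower order terms. -/
noncomputable def Fil (M N d : ℕ) : Submodule ℂ (Y M N) :=
  Submodule.span ℂ {x | ∃ l : List (Gen M N), deg l < d ∧ word l = x}

lemma deg_cons {M N : ℕ} (g : Gen M N) (l : List (Gen M N)) :
    deg (g :: l) = g.2.2 + 1 + deg l := by simp [deg]

lemma deg_append {M N : ℕ} (l l' : List (Gen M N)) : deg (l ++ l') = deg l + deg l' := by
  simp [deg]

lemma word_cons {M N : ℕ} (g : Gen M N) (l : List (Gen M N)) :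
    word (g :: l) = tg M N g * word l := by simp [word]

lemma word_append {M N : ℕ} (l l' : List (Gen M N)) : word (l ++ l') = word l * word l' := by
  simp [word]

lemma word_mem_Fil {M N d : ℕ} (l : List (Gen M N)) (h : deg l < d) : word l ∈ Fil M N d :=
  Submodule.subset_span ⟨l, h, rfl⟩

lemma word_mul_mem {M N d : ℕ} (l : List (Gen M N)) {x : Y M N} (hx : x ∈ Fil M N d) :
    word l * x ∈ Fil M N (deg l + d) := by
  induction hx using Submodule.span_induction with
  | mem x h =>
    obtain ⟨l', hl', rfl⟩ := h
    rw [← word_append]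
    exact word_mem_Fil _ (by rw [deg_append]; omega)
  | zero => simp
  | add x y _ _ hx hy => rw [mul_add]; exact add_mem hx hy
  | smul c x _ hx => rw [mul_smul_comm]; exact Submodule.smul_mem _ _ hx

lemma mul_word_mem {M N d : ℕ} (l : List (Gen M N)) {x : Y M N} (hx : x ∈ Fil M N d) :
    x * word l ∈ Fil M N (d + deg l) := by
  induction hx using Submodule.span_induction with
  | mem x h =>
    obtain ⟨l', hl', rfl⟩ := h
    rw [← word_append]
    exact word_mem_Fil _ (by rw [deg_append]; omega)
  | zero => simp
  | add x y _ _ hx hy => rw [add_mul]; exact add_mem hx hy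
  | smul c x _ hx => rw [smul_mul_assoc]; exact Submodule.smul_mem _ _ hx

lemma exists_mem_Fil {M N : ℕ} (y : Y M N) : ∃ d, y ∈ Fil M N d := by
  have mono : ∀ {d e : ℕ}, d ≤ e → Fil M N d ≤ Fil M N e := fun h =>
    Submodule.span_mono (by rintro x ⟨l, hl, rfl⟩; exact ⟨l, by omega, rfl⟩)
  have add_aux : ∀ {x z : Y M N}, (∃ d, x ∈ Fil M N d) → (∃ d, z ∈ Fil M N d) →
      ∃ d, x + z ∈ Fil M N d := by
    rintro x z ⟨d, hx⟩ ⟨e, hz⟩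
    exact ⟨max d e, add_mem (mono (le_max_left _ _) hx) (mono (le_max_right _ _) hz)⟩
  have mul_aux : ∀ {x z : Y M N}, (∃ d, x ∈ Fil M N d) → (∃ d, z ∈ Fil M N d) →
      ∃ d, x * z ∈ Fil M N d := by
    rintro x z ⟨d, hx⟩ ⟨e, hz⟩
    induction hx using Submodule.span_induction with
    | mem x h =>
      obtain ⟨l, -, rfl⟩ := h
      exact ⟨_, word_mul_mem l hz⟩
    | zero => exact ⟨0, by simp⟩
    | add x y _ _ hx hy => rw [add_mul]; exact add_aux hx hy
    | smul c x _ hx =>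
      obtain ⟨d, hd⟩ := hx
      exact ⟨d, by rw [smul_mul_assoc]; exact Submodule.smul_mem _ _ hd⟩
  obtain ⟨f, rfl⟩ := RingQuot.mkAlgHom_surjective ℂ (Rel M N) y
  induction f using FreeAlgebra.induction with
  | grade0 r =>
    refine ⟨1, ?_⟩
    rw [AlgHom.commutes, Algebra.algebraMap_eq_smul_one]
    refine Submodule.smul_mem _ _ ?_
    simpa [word] using word_mem_Fil (M := M) (N := N) (d := 1) [] (by simp [deg])
  | grade1 g =>
    refine ⟨deg [g] + 1, ?_⟩
    simpa [word, tg] using word_mem_Fil [g] (Nat.lt_succ_self _)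
  | mul a b ha hb => rw [map_mul]; exact mul_aux ha hb
  | add a b ha hb => rw [map_add]; exact add_aux ha hb

/-! ### Commutation relations -/

lemma tg_eq_t {M N : ℕ} (g : Gen M N) : tg M N g = t M N g.1 g.2.1 (g.2.2 + 1) := rfl

lemma t_rel {M N : ℕ} (a1 b1 a2 b2 : Fin (M + N)) (m n : ℕ) (hm : 1 ≤ m) (hn : 1 ≤ n) :
    t M N a1 b1 m * t M N a2 b2 n - sgn1 M a1 b1 a2 b2 • (t M N a2 b2 n * t M N a1 b1 m) =
      (if b1 = a2 then t M N a1 b2 (m + n - 1) else 0)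
          - sgn1 M a1 b1 a2 b2 • (if b2 = a1 then t M N a2 b1 (m + n - 1) else 0)
          + sgn2 M a1 b1 a2 •
              ∑ r ∈ Finset.Ico 1 (min m n),
                (t M N a2 b1 r * t M N a1 b2 (m + n - 1 - r)
                  - t M N a2 b1 (m + n - 1 - r) * t M N a1 b2 r) := by
  have h := RingQuot.mkAlgHom_rel ℂ (Rel.defining a1 b1 a2 b2 m n hm hn)
  simp only [map_sub, map_mul, map_smul, map_add, map_sum, apply_ite (RingQuot.mkAlgHom ℂ (Rel M N)),
    map_zero] at h
  exact h

lemma t_mem_Fil {M N d : ℕ} (a b : Fin (M + N)) (n : ℕ) (hn : 1 ≤ n) (h : n < d) :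
    t M N a b n ∈ Fil M N d := by
  have := word_mem_Fil (M := M) (N := N) (d := d) [(a, b, n - 1)] (by simp [deg]; omega)
  simpa [word, t, tg, T] using this

lemma t_mul_t_mem_Fil {M N d : ℕ} (a b a' b' : Fin (M + N)) (m n : ℕ) (hm : 1 ≤ m) (hn : 1 ≤ n)
    (h : m + n < d) : t M N a b m * t M N a' b' n ∈ Fil M N d := by
  have := word_mem_Fil (M := M) (N := N) (d := d) [(a, b, m - 1), (a', b', n - 1)]
    (by simp [deg]; omega)
  simpa [word, t, tg, T] using this

lemma tg_mul_tg {M N : ℕ} (g h : Gen M N) :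
    ∃ s : ℂ, tg M N g * tg M N h - s • (tg M N h * tg M N g) ∈
      Fil M N (g.2.2 + 1 + (h.2.2 + 1)) := by
  obtain ⟨a1, b1, m⟩ := g
  obtain ⟨a2, b2, n⟩ := h
  refine ⟨sgn1 M a1 b1 a2 b2, ?_⟩
  rw [tg_eq_t, tg_eq_t, t_rel _ _ _ _ _ _ (by simp) (by simp)]
  refine add_mem (sub_mem ?_ (Submodule.smul_mem _ _ ?_))
    (Submodule.smul_mem _ _ (Submodule.sum_mem _ fun r hr => ?_))
  · split_ifs
    · exact t_mem_Fil _ _ _ (by omega) (by omega)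
    · exact zero_mem _
  · split_ifs
    · exact t_mem_Fil _ _ _ (by omega) (by omega)
    · exact zero_mem _
  · simp only [Finset.mem_Ico, lt_min_iff] at hr
    exact sub_mem (t_mul_t_mem_Fil _ _ _ _ _ _ (by omega) (by simp; omega) (by simp; omega))
      (t_mul_t_mem_Fil _ _ _ _ _ _ (by simp; omega) (by omega) (by simp; omega))

/-- A generator can be moved past a word, up to a scalar and terms of lower degree. -/
lemma tg_mul_word {M N : ℕ} (g : Gen M N) (l : List (Gen M N)) :
    ∃ s : ℂ, tg M N g * word l - s • (word l * tg M N g) ∈ Fil M N (g.2.2 + 1 + deg l) := by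
  induction l with
  | nil => exact ⟨1, by simp [word]⟩
  | cons h l ih =>
    obtain ⟨s, hs⟩ := ih
    obtain ⟨s', hs'⟩ := tg_mul_tg g h
    refine ⟨s' * s, ?_⟩
    have e : tg M N g * word (h :: l) - (s' * s) • (word (h :: l) * tg M N g) =
        (tg M N g * tg M N h - s' • (tg M N h * tg M N g)) * word l +
          s' • (word [h] * (tg M N g * word l - s • (word l * tg M N g))) := by
      have hw : word [h] = tg M N h := by simp [word]
      simp only [word_cons, hw, sub_mul, mul_sub, smul_sub, smul_mul_assoc, mul_smul_comm, smul_smul,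
        mul_assoc]
      abel
    rw [e]
    have h1 := mul_word_mem l hs'
    have h2 := word_mul_mem [h] hs
    refine add_mem ?_ (Submodule.smul_mem _ _ ?_)
    · convert h1 using 2
      rw [deg_cons]; omega
    · convert h2 using 2
      rw [deg_cons, deg_cons, show deg ([] : List (Gen M N)) = 0 from rfl]; omega

/-! ### The principal grading -/

/-- The element `-∑ a t^a_a[1]`, whose adjoint action grades `t^b_c[n]` by `c - b`. -/
noncomputable def hgr (M N : ℕ) : Y M N := ∑ a : Fin (M + N), (-(a : ℂ)) • t M N a a 1

/-- Stated for an abstract module because the scalar action on `RingQuot` agrees with the one coming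
from its module structure only after unfolding instances. -/
lemma neg_smul_sub_neg_smul {A : Type*} [AddCommGroup A] [Module ℂ A] (b c : ℂ) (x : A) :
    (-b) • x - (-c) • x = (c - b) • x := by
  module

lemma hgr_mul_tg {M N : ℕ} (g : Gen M N) :
    hgr M N * tg M N g = tg M N g * hgr M N + ((g.2.1 : ℂ) - (g.1 : ℂ)) • tg M N g := by
  obtain ⟨b, c, n⟩ := g
  have key : ∀ a : Fin (M + N), t M N a a 1 * tg M N (b, c, n) =
      tg M N (b, c, n) * t M N a a 1 + ((if a = b then tg M N (b, c, n) else 0)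
        - (if a = c then tg M N (b, c, n) else 0)) := by
    intro a
    have h := t_rel a a b c 1 (n + 1) le_rfl (by simp)
    have hs : sgn1 M a a b c = 1 := by
      unfold sgn1
      rw [← two_mul, mul_assoc, pow_mul]
      simp
    rw [hs, Nat.min_eq_left (by omega), Finset.Ico_self, Finset.sum_empty, smul_zero, add_zero,
      one_smul, one_smul, sub_eq_iff_eq_add, show 1 + (n + 1) - 1 = n + 1 by omega] at h
    rw [tg_eq_t, h, add_comm]
    congr 2
    · split_ifs with h <;> simp [h]
    · by_cases h : a = c
      · simp [h]
      · simp [h, Ne.symm h]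
  have h2 : ∀ a : Fin (M + N), (-(a : ℂ)) • t M N a a 1 * tg M N (b, c, n) =
      tg M N (b, c, n) * ((-(a : ℂ)) • t M N a a 1) +
        ((if a = b then (-(a : ℂ)) • tg M N (b, c, n) else 0)
        - (if a = c then (-(a : ℂ)) • tg M N (b, c, n) else 0)) := by
    intro a
    rw [smul_mul_assoc, key, smul_add, mul_smul_comm, smul_sub, smul_ite, smul_ite, smul_zero]
  simp only [hgr, Finset.sum_mul, h2, Finset.sum_add_distrib, Finset.sum_sub_distrib,
    Finset.sum_ite_eq', Finset.mem_univ, if_true, Finset.mul_sum]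
  congr 1
  exact neg_smul_sub_neg_smul _ _ _

section HighestWeight

variable {M N : ℕ} {V : Type*} [AddCommGroup V] [Module ℂ V]
  (ρ : Y M N →ₐ[ℂ] Module.End ℂ V) (v : V) (Λ : Fin (M + N) → ℕ → ℂ)

/-- The eigenvalue of `hgr` on a maximal vector of weight `Λ`. -/
noncomputable def topEig (Λ : Fin (M + N) → ℕ → ℂ) : ℂ := ∑ a : Fin (M + N), (-(a : ℂ)) * Λ a 1

lemma hgr_apply (hv : IsMaximalVec M N ρ v Λ) : ρ (hgr M N) v = topEig Λ • v := by
  simp only [hgr, topEig, map_sum, map_smul, LinearMap.sum_apply, LinearMap.smul_apply,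
    Finset.sum_smul]
  refine Finset.sum_congr rfl fun a _ => ?_
  rw [hv.2.2 a 1 le_rfl, smul_smul]

/-- A word in lowering generators lowers the `hgr`-eigenvalue by at least its length. -/
lemma hgr_lower_word (hv : IsMaximalVec M N ρ v Λ) (l : List (Gen M N))
    (hl : ∀ g ∈ l, g.2.1 < g.1) :
    ∃ k : ℕ, l.length ≤ k ∧ ρ (hgr M N) (ρ (word l) v) = (topEig Λ - k) • ρ (word l) v := by
  induction l with
  | nil => exact ⟨0, le_rfl, by simp [word, hgr_apply ρ v Λ hv]⟩
  | cons g l ih =>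
    obtain ⟨k, hk, hk'⟩ := ih fun x hx => hl x (List.mem_cons_of_mem _ hx)
    have hg : g.2.1 < g.1 := hl g List.mem_cons_self
    have hg' : (g.2.1 : ℕ) < g.1 := hg
    refine ⟨k + (g.1 - g.2.1 : ℕ), by simp only [List.length_cons]; omega, ?_⟩
    have e : ρ (hgr M N) (ρ (word (g :: l)) v) = ρ (hgr M N * tg M N g) (ρ (word l) v) := by
      simp [word_cons]
    rw [e, hgr_mul_tg, word_cons]
    simp only [map_add, map_mul, map_smul, LinearMap.add_apply, Module.End.mul_apply,
      LinearMap.smul_apply, hk', ← add_smul]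
    congr 1
    push_cast [Nat.cast_sub hg'.le]
    ring

/-- The highest-weight line together with all eigenspaces of `hgr` for the other eigenvalues. -/
noncomputable def lowerSpace : Submodule ℂ V :=
  Submodule.span ℂ {v} ⊔ ⨆ μ, ⨆ _ : μ ≠ topEig Λ, Module.End.eigenspace (ρ (hgr M N)) μ

/-- The straightening argument: modulo words of smaller degree, a word applied to `v` is either a
lowering word applied to `v`, or has a generator that acts on `v` by a scalar. -/
lemma Fil_apply_mem (hv : IsMaximalVec M N ρ v Λ) (d : ℕ) :
    ∀ y ∈ Fil M N d, ρ y v ∈ lowerSpace ρ v Λ := by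
  induction d with
  | zero =>
    intro y hy
    have : y = 0 := by simpa [Fil] using hy
    simp [this]
  | succ d ih =>
    intro y hy
    induction hy using Submodule.span_induction with
    | zero => simp
    | add x y _ _ hx hy => rw [map_add]; exact add_mem hx hy
    | smul c x _ hx => rw [map_smul]; exact Submodule.smul_mem _ _ hx
    | mem y h =>
      obtain ⟨l, hl, rfl⟩ := h
      by_cases hlow : ∀ g ∈ l, g.2.1 < g.1
      · rcases l with _ | ⟨g, l⟩
        · refine Submodule.mem_sup_left ?_
          simp [word]
        · obtain ⟨k, hk, hk'⟩ := hgr_lower_word ρ v Λ hv _ hlow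
          refine Submodule.mem_sup_right (Submodule.mem_iSup_of_mem (topEig Λ - k)
            (Submodule.mem_iSup_of_mem ?_ (Module.End.mem_eigenspace_iff.2 hk')))
          have : k ≠ 0 := by simp only [List.length_cons] at hk; omega
          simpa using this
      · push Not at hlow
        obtain ⟨g, hg, hgab⟩ := hlow
        obtain ⟨l₁, l₂, rfl⟩ := List.append_of_mem hg
        -- Move the non-lowering generator `g` to the far right, where it acts on `v` by a scalar.
        obtain ⟨s, hs⟩ := tg_mul_word g l₂
        have hd : deg l₁ + (g.2.2 + 1 + deg l₂) ≤ d := by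
          rw [deg_append, deg_cons] at hl; omega
        obtain ⟨c, hc⟩ : ∃ c : ℂ, ρ (tg M N g) v = c • v := by
          rw [tg_eq_t]
          rcases hgab.lt_or_eq with h | h
          · exact ⟨0, by rw [hv.2.1 _ _ h _ (by simp), zero_smul]⟩
          · exact ⟨_, by rw [← h]; exact hv.2.2 _ _ (by simp)⟩
        have e : word (l₁ ++ g :: l₂) = s • (word (l₁ ++ l₂) * tg M N g) +
            word l₁ * (tg M N g * word l₂ - s • (word l₂ * tg M N g)) := by
          simp only [word_append, word_cons, mul_sub, mul_smul_comm, mul_assoc]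
          abel
        rw [e, map_add, LinearMap.add_apply]
        refine add_mem ?_ (ih _ ?_)
        · rw [map_smul, map_mul, LinearMap.smul_apply, Module.End.mul_apply, hc, map_smul]
          refine Submodule.smul_mem _ _ (Submodule.smul_mem _ _ (ih _ (word_mem_Fil _ ?_)))
          rw [deg_append]; omega
        · refine (Submodule.span_mono ?_ : Fil M N _ ≤ Fil M N d) (word_mul_mem l₁ hs)
          rintro x ⟨l, hl, rfl⟩
          exact ⟨l, by omega, rfl⟩

/-- The top eigenspace of `hgr` in the submodule generated by a maximal vector is a line. -/
lemma eq_smul_of_mem_eigenspace (hv : IsMaximalVec M N ρ v Λ) (y : Y M N)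
    (hy : ρ (hgr M N) (ρ y v) = topEig Λ • ρ y v) : ∃ c : ℂ, ρ y v = c • v := by
  obtain ⟨d, hd⟩ := exists_mem_Fil y
  obtain ⟨x, hx, z, hz, hxz⟩ := Submodule.mem_sup.1 (Fil_apply_mem ρ v Λ hv d y hd)
  obtain ⟨c, rfl⟩ := Submodule.mem_span_singleton.1 hx
  have hz' : z ∈ Module.End.eigenspace (ρ (hgr M N)) (topEig Λ) := by
    rw [Module.End.mem_eigenspace_iff, ← sub_eq_of_eq_add' hxz.symm, map_sub, hy, map_smul,
      hgr_apply ρ v Λ hv, smul_sub, smul_comm]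
  have h0 : z = 0 := Submodule.disjoint_def.1
    (Module.End.eigenspaces_iSupIndep (ρ (hgr M N)) (topEig Λ)) z hz' hz
  exact ⟨c, by rw [← hxz, h0, add_zero]⟩

end HighestWeight

/-! ### Comparison of irreducible modules -/

/-- The orbit map `y ↦ ρ y x`. -/
noncomputable def orb {M N : ℕ} {V : Type*} [AddCommGroup V] [Module ℂ V]
    (ρ : Y M N →ₐ[ℂ] Module.End ℂ V) (x : V) : Y M N →ₗ[ℂ] V :=
  (LinearMap.applyₗ x).comp ρ.toLinearMap

lemma orb_apply {M N : ℕ} {V : Type*} [AddCommGroup V] [Module ℂ V]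
    (ρ : Y M N →ₐ[ℂ] Module.End ℂ V) (x : V) (y : Y M N) : orb ρ x y = ρ y x := rfl

lemma orb_surjective {M N : ℕ} {V : Type*} [AddCommGroup V] [Module ℂ V]
    (ρ : Y M N →ₐ[ℂ] Module.End ℂ V) (h : IsIrreducibleRep M N ρ) (x : V) (hx : x ≠ 0) :
    Function.Surjective (orb ρ x) := by
  rw [← LinearMap.range_eq_top]
  refine (h.2 (LinearMap.range (orb ρ x)) ?_).resolve_left fun hb => hx ?_
  · rintro y _ ⟨z, rfl⟩
    exact ⟨y * z, by simp [orb_apply]⟩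
  · have : x ∈ LinearMap.range (orb ρ x) := ⟨1, by simp [orb_apply]⟩
    rwa [hb, Submodule.mem_bot] at this

/-- The annihilator of `v₁` is contained in that of `v₂`. -/
lemma ann_le {M N : ℕ} {Λ : Fin (M + N) → ℕ → ℂ}
    {V₁ : Type*} [AddCommGroup V₁] [Module ℂ V₁] {V₂ : Type*} [AddCommGroup V₂] [Module ℂ V₂]
    (ρ₁ : Y M N →ₐ[ℂ] Module.End ℂ V₁) (ρ₂ : Y M N →ₐ[ℂ] Module.End ℂ V₂)
    (h₂ : IsIrreducibleRep M N ρ₂) (v₁ : V₁) (v₂ : V₂)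
    (hm₁ : IsMaximalVec M N ρ₁ v₁ Λ) (hm₂ : IsMaximalVec M N ρ₂ v₂ Λ) :
    LinearMap.ker (orb ρ₁ v₁) ≤ LinearMap.ker (orb ρ₂ v₂) := by
  intro y hy
  rw [LinearMap.mem_ker, orb_apply] at hy ⊢
  by_contra hne
  obtain ⟨z, hz⟩ := orb_surjective ρ₂ h₂ _ hne v₂
  rw [orb_apply] at hz
  let ρ : Y M N →ₐ[ℂ] Module.End ℂ (V₁ × V₂) :=
    (LinearMap.prodMapAlgHom ℂ V₁ V₂).comp (ρ₁.prod ρ₂)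
  have hρ : ∀ (y : Y M N) (x : V₁ × V₂), ρ y x = (ρ₁ y x.1, ρ₂ y x.2) := fun _ _ => rfl
  have hm : IsMaximalVec M N ρ (v₁, v₂) Λ := by
    refine ⟨fun h => hm₁.1 (congrArg Prod.fst h), fun a b hab n hn => ?_, fun a n hn => ?_⟩
    · rw [hρ, hm₁.2.1 a b hab n hn, hm₂.2.1 a b hab n hn]; rfl
    · rw [hρ, hm₁.2.2 a n hn, hm₂.2.2 a n hn]; rfl
  have e : ρ (z * y) (v₁, v₂) = (0, v₂) := by simp [hρ, hy, hz]
  obtain ⟨c, hc⟩ := eq_smul_of_mem_eigenspace ρ (v₁, v₂) Λ hm (z * y) (by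
    rw [e, hρ]
    simp [hgr_apply ρ₂ v₂ Λ hm₂])
  rw [e] at hc
  have hc1 : 0 = c • v₁ := congrArg Prod.fst hc
  have hc2 : v₂ = c • v₂ := congrArg Prod.snd hc
  rcases smul_eq_zero.1 hc1.symm with h | h
  · exact hm₂.1 (by rw [hc2, h, zero_smul])
  · exact hm₁.1 h

/-- **Uniqueness of irreducible highest weight modules** (Theorem 3): two irreducible
`Y(gl(M|N))`-modules containing maximal vectors of the same weight `Λ` are isomorphic. -/
theorem highest_weight_unique (M N : ℕ) (hMN : 1 ≤ M + N)
    (Λ : Fin (M + N) → ℕ → ℂ)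
    (V₁ : Type) [AddCommGroup V₁] [Module ℂ V₁]
    (V₂ : Type) [AddCommGroup V₂] [Module ℂ V₂]
    (ρ₁ : Y M N →ₐ[ℂ] Module.End ℂ V₁) (ρ₂ : Y M N →ₐ[ℂ] Module.End ℂ V₂)
    (h₁ : IsIrreducibleRep M N ρ₁) (h₂ : IsIrreducibleRep M N ρ₂)
    (v₁ : V₁) (v₂ : V₂)
    (hm₁ : IsMaximalVec M N ρ₁ v₁ Λ) (hm₂ : IsMaximalVec M N ρ₂ v₂ Λ) :
    ∃ e : V₁ ≃ₗ[ℂ] V₂, ∀ (y : Y M N) (v : V₁), e (ρ₁ y v) = ρ₂ y (e v) := by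
  have hk : LinearMap.ker (orb ρ₁ v₁) = LinearMap.ker (orb ρ₂ v₂) :=
    le_antisymm (ann_le ρ₁ ρ₂ h₂ v₁ v₂ hm₁ hm₂) (ann_le ρ₂ ρ₁ h₁ v₂ v₁ hm₂ hm₁)
  have s₁ := orb_surjective ρ₁ h₁ v₁ hm₁.1
  have s₂ := orb_surjective ρ₂ h₂ v₂ hm₂.1
  let e : V₁ ≃ₗ[ℂ] V₂ := ((orb ρ₁ v₁).quotKerEquivOfSurjective s₁).symm.trans
    ((Submodule.quotEquivOfEq _ _ hk).trans ((orb ρ₂ v₂).quotKerEquivOfSurjective s₂))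
  have he : ∀ y, e (ρ₁ y v₁) = ρ₂ y v₂ := by
    intro y
    have : ((orb ρ₁ v₁).quotKerEquivOfSurjective s₁).symm (ρ₁ y v₁) = Submodule.Quotient.mk y := by
      rw [LinearEquiv.symm_apply_eq]; rfl
    simp only [e, LinearEquiv.trans_apply, this]
    rfl
  refine ⟨e, fun y v => ?_⟩
  obtain ⟨z, rfl⟩ := s₁ v
  rw [orb_apply, he, ← Module.End.mul_apply, ← map_mul, he, map_mul, Module.End.mul_apply]

end SY
end

section
/- Tensor product of maximal vectors: Let V and W be ℤ₂-graded Y(gl(M|N))-modules (homogeneous elements of Y(gl(M|N)) of parity θ map V_φ into V_{θ+φ}) with ℤ₂-homogeneous maximal vectors v_+ ∈ V of weight μ = (μ_a[n]) and w_+ ∈ W of weight ν = (ν_a[n]). Regard V ⊗ W as a Y(gl(M|N))-module via the comultiplication Δ(t^a_b[n]) = Σ_{c=1}^{M+N} Σ_{r=0}^{n} (−1)^{[c] + ([b]+[c])([c]+[a])} t^c_b[r] ⊗ t^a_c[n−r] (with t^a_b[0] := (−1)^{[b]} δ^a_b · 1), where x ⊗ y acts on homogeneous v ⊗ w by (−1)^{|y||v|}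 (x v) ⊗ (y w). Then v_+ ⊗ w_+ is a maximal vector in V ⊗ W whose weight λ = (λ_a[n]) satisfies λ_a(x) = (−1)^{[a]} μ_a(x) ν_a(x) as formal power series in x^{−1}; explicitly, λ_a[n] = μ_a[n] + ν_a[n] + (−1)^{[a]} Σ_{k=1}^{n−1} μ_a[k] ν_a[n−k], where λ_a(x) = (−1)^{[a]} + Σ_{k≥1} λ_a[k]x^{−k} and likewise for μ_a(x), ν_a(x). -/
/-!
The summand `t^c_b[r] ⊗ t^a_c[n-r]` of `Δ(t^a_b[n])` can act nontrivially on a tensor product of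
maximal vectors only if `b ≤ c ≤ a` (`summand_zero`). For `a < b` there is no such `c`, so the
vector is annihilated. For `a = b` only `c = a` remains; both factors are then even and act by
the coefficients of `μ_a(x)` and `ν_a(x)` (`diag_factor`), which gives the coefficients of
`(−1)^{[a]} μ_a(x) ν_a(x)`. Separating the terms `r = 0` and `r = n`, where one coefficient is
`(−1)^{[a]}` and cancels the prefactor, gives the explicit formula. The tensor is nonzero because
pure tensors of nonzero vectors over a field are nonzero.
-/

open scoped BigOperators TensorProduct

namespace SY

/-- The action of the generator `t^a_b[n]` on `v ⊗ w` in the tensor product module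
`V ⊗ W` (for `v` homogeneous of parity `εv`), obtained from the comultiplication
`Δ(t^a_b[n]) = ∑_c ∑_{r=0}^{n} (−1)^{[c]+([b]+[c])([c]+[a])} t^c_b[r] ⊗ t^a_c[n-r]`
(with `t^a_b[0] := (−1)^{[b]} δ^a_b · 1`), where `x ⊗ y` acts on `v ⊗ w` by
`(−1)^{|y||v|} (x v) ⊗ (y w)`. -/
noncomputable def tpAct (M N : ℕ) {V W : Type} [AddCommGroup V] [Module ℂ V]
    [AddCommGroup W] [Module ℂ W]
    (ρV : Y M N →ₐ[ℂ] Module.End ℂ V) (ρW : Y M N →ₐ[ℂ] Module.End ℂ W)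
    (εv : ZMod 2) (v : V) (w : W) (a b : Fin (M + N)) (n : ℕ) :
    TensorProduct ℂ V W :=
  ∑ c : Fin (M + N), ∑ r ∈ Finset.range (n + 1),
    ((-1 : ℂ) ^ (pa M c + (pa M b + pa M c) * (pa M c + pa M a)
        + ((pa M a + pa M c) % 2) * εv.val)) •
      ((if r = 0 then ((-1 : ℂ) ^ pa M b * (if c = b then 1 else 0)) • v
          else ρV (t M N c b r) v) ⊗ₜ[ℂ]
        (if n - r = 0 then ((-1 : ℂ) ^ pa M c * (if a = c then 1 else 0)) • w
          else ρW (t M N a c (n - r)) w))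

/-- A tensor factor `t^c_b[r] v` of the comultiplication, where `t^c_b[0]` is a multiple of `δ^c_b`,
vanishes on a maximal vector when `c < b`. -/
lemma raising_factor_zero {M N : ℕ} {V : Type} [AddCommGroup V] [Module ℂ V]
    {ρ : Y M N →ₐ[ℂ] Module.End ℂ V} {v : V} {μ : Fin (M + N) → ℕ → ℂ}
    (h : IsMaximalVec M N ρ v μ) {c b : Fin (M + N)} (hcb : c < b) (s : ℂ) (r : ℕ) :
    (if r = 0 then (s * (if c = b then 1 else 0)) • v else ρ (t M N c b r) v) = 0 := by
  split_ifs with hr hc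
  · exact absurd hc hcb.ne
  · simp
  · exact h.2.1 c b hcb r (Nat.one_le_iff_ne_zero.mpr hr)

/-- On a maximal vector, `t^a_a[r]` acts by the `r`-th coefficient of the series `μ_a(x)`, whose
constant term is `(−1)^{[a]}`. -/
lemma diag_factor {M N : ℕ} {V : Type} [AddCommGroup V] [Module ℂ V]
    {ρ : Y M N →ₐ[ℂ] Module.End ℂ V} {v : V} {μ : Fin (M + N) → ℕ → ℂ}
    (h : IsMaximalVec M N ρ v μ) (a : Fin (M + N)) (r : ℕ) :
    (if r = 0 then (-1 : ℂ) ^ pa M a • v else ρ (t M N a a r) v)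
      = (if r = 0 then (-1 : ℂ) ^ pa M a else μ a r) • v := by
  split_ifs with hr
  · rfl
  · exact h.2.2 a r (Nat.one_le_iff_ne_zero.mpr hr)

/-- The summand `t^c_b[r] ⊗ t^a_c[q]` of `Δ(t^a_b[n])` kills `v ⊗ w` unless `b ≤ c ≤ a`. -/
lemma summand_zero {M N : ℕ} {V W : Type} [AddCommGroup V] [Module ℂ V]
    [AddCommGroup W] [Module ℂ W]
    {ρV : Y M N →ₐ[ℂ] Module.End ℂ V} {ρW : Y M N →ₐ[ℂ] Module.End ℂ W}
    {v : V} {w : W} {μ ν : Fin (M + N) → ℕ → ℂ}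
    (hv : IsMaximalVec M N ρV v μ) (hw : IsMaximalVec M N ρW w ν)
    {a b c : Fin (M + N)} (hc : c < b ∨ a < c) (z s s' : ℂ) (r q : ℕ) :
    z • ((if r = 0 then (s * (if c = b then 1 else 0)) • v else ρV (t M N c b r) v) ⊗ₜ[ℂ]
        (if q = 0 then (s' * (if a = c then 1 else 0)) • w else ρW (t M N a c q) w)) = 0 := by
  rcases hc with hc | hc
  · rw [raising_factor_zero hv hc, TensorProduct.zero_tmul, smul_zero]
  · rw [raising_factor_zero hw hc, TensorProduct.tmul_zero, smul_zero]

/-- **Tensor product of maximal vectors**: if `vp ∈ V` and `wp ∈ W` are homogeneous maximal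
vectors of weights `μ` and `ν` in ℤ₂-graded `Y(gl(M|N))`-modules, then `vp ⊗ wp` is a
maximal vector of `V ⊗ W` whose weight `λ` satisfies `λ_a(x) = (−1)^{[a]} μ_a(x) ν_a(x)`,
i.e. `λ_a[n] = μ_a[n] + ν_a[n] + (−1)^{[a]} ∑_{k=1}^{n-1} μ_a[k] ν_a[n-k]`. -/
theorem tensor_maximal_vector (M N : ℕ) (hMN : 1 ≤ M + N)
    (V W : Type) [AddCommGroup V] [Module ℂ V] [AddCommGroup W] [Module ℂ W]
    (ρV : Y M N →ₐ[ℂ] Module.End ℂ V) (ρW : Y M N →ₐ[ℂ] Module.End ℂ W)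
    (gV : ZMod 2 → Submodule ℂ V) (gW : ZMod 2 → Submodule ℂ W)
    (hgV : DirectSum.IsInternal gV) (hgW : DirectSum.IsInternal gW)
    (hactV : ∀ (a b : Fin (M + N)) (n : ℕ), 1 ≤ n → ∀ φ : ZMod 2, ∀ v ∈ gV φ,
      ρV (t M N a b n) v ∈ gV (φ + (pa M a + pa M b : ℕ)))
    (hactW : ∀ (a b : Fin (M + N)) (n : ℕ), 1 ≤ n → ∀ φ : ZMod 2, ∀ w ∈ gW φ,
      ρW (t M N a b n) w ∈ gW (φ + (pa M a + pa M b : ℕ)))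
    (vp : V) (wp : W) (εv εw : ZMod 2) (hv : vp ∈ gV εv) (hw : wp ∈ gW εw)
    (μ ν : Fin (M + N) → ℕ → ℂ)
    (hmv : IsMaximalVec M N ρV vp μ) (hmw : IsMaximalVec M N ρW wp ν) :
    (vp ⊗ₜ[ℂ] wp ≠ 0) ∧
    (∀ a b : Fin (M + N), a < b → ∀ n : ℕ, 1 ≤ n →
      tpAct M N ρV ρW εv vp wp a b n = 0) ∧
    (∀ (a : Fin (M + N)) (n : ℕ), 1 ≤ n →
      tpAct M N ρV ρW εv vp wp a a n
        = (μ a n + ν a n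
            + (-1 : ℂ) ^ pa M a * ∑ k ∈ Finset.Ico 1 n, μ a k * ν a (n - k))
              • (vp ⊗ₜ[ℂ] wp)) := by
  refine ⟨?_, ?_, ?_⟩
  · intro h
    -- Linear functionals nonzero on `vp` and `wp` give one nonzero on `vp ⊗ wp`.
    obtain ⟨f, hf⟩ := not_forall.mp (mt (Module.forall_dual_apply_eq_zero_iff ℂ vp).mp hmv.1)
    obtain ⟨g, hg⟩ := not_forall.mp (mt (Module.forall_dual_apply_eq_zero_iff ℂ wp).mp hmw.1)
    have h' := congrArg (TensorProduct.lid ℂ ℂ ∘ TensorProduct.map f g) h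
    simp only [Function.comp_apply, TensorProduct.map_tmul, TensorProduct.lid_tmul, smul_eq_mul,
      map_zero] at h'
    exact mul_ne_zero hf hg h'
  · intro a b hab n _
    unfold tpAct
    refine Finset.sum_eq_zero fun c _ => Finset.sum_eq_zero fun r _ =>
      summand_zero hmv hmw ?_ _ _ _ _ _
    by_contra! h
    exact absurd (h.1.trans h.2) hab.not_ge
  · intro a n hn
    unfold tpAct
    rw [Finset.sum_eq_single a
      (fun c _ hc => Finset.sum_eq_zero fun r _ =>
        summand_zero hmv hmw (lt_or_gt_of_ne hc) _ _ _ _ _)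
      (fun h => absurd (Finset.mem_univ a) h)]
    have hsq : (-1 : ℂ) ^ pa M a * (-1 : ℂ) ^ pa M a = 1 := by
      rw [← mul_pow]; norm_num
    -- The Koszul signs disappear since `[a] + [a]` is even.
    have hsign : (-1 : ℂ) ^ (pa M a + (pa M a + pa M a) * (pa M a + pa M a)
        + ((pa M a + pa M a) % 2) * εv.val) = (-1 : ℂ) ^ pa M a := by
      have h2 : (pa M a + pa M a) % 2 = 0 := by omega
      rw [h2, zero_mul, add_zero, pow_add, ((Even.add_self (pa M a)).mul_right _).neg_one_pow,
        mul_one]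
    simp only [hsign, if_true, mul_one, diag_factor hmv, diag_factor hmw,
      TensorProduct.smul_tmul_smul, smul_smul]
    rw [← Finset.sum_smul]
    congr 1
    obtain ⟨m, rfl⟩ : ∃ m, n = m + 1 := ⟨n - 1, by omega⟩
    rw [Finset.sum_range_succ, Finset.range_eq_Ico, Finset.sum_eq_sum_Ico_succ_bot (by omega)]
    have hmid : ∀ k ∈ Finset.Ico (0 + 1) (m + 1),
        (-1 : ℂ) ^ pa M a * ((if k = 0 then (-1 : ℂ) ^ pa M a else μ a k)
          * (if m + 1 - k = 0 then (-1 : ℂ) ^ pa M a else ν a (m + 1 - k)))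
        = (-1 : ℂ) ^ pa M a * (μ a k * ν a (m + 1 - k)) := by
      intro k hk
      rw [Finset.mem_Ico] at hk
      rw [if_neg (by omega), if_neg (by omega)]
    rw [Finset.sum_congr rfl hmid, ← Finset.mul_sum]
    simp only [if_true, Nat.sub_self, Nat.sub_zero, Nat.add_eq_zero_iff, one_ne_zero, and_false,
      if_false, zero_add]
    linear_combination (μ a (m + 1) + ν a (m + 1)) * hsq

end SY
end

section
/- Subalgebra embeddings: Assume M, N ≥ 1. (i) The assignment t^i_j[n] ↦ t^i_j[n] (1 ≤ i,j ≤ M, n ≥ 1) extends to an injective unital ℂ-algebra homomorphism Y(gl(M|0)) → Y(gl(M|N)). (ii) The assignment t^μ_ν[n] ↦ t^{M+μ}_{M+ν}[n] (1 ≤ μ,ν ≤ N, n ≥ 1) extends to an injective unital ℂ-algebra homomorphism Y(gl(0|N)) → Y(gl(M|N)). (iii) The assignment sending the generators of Y(gl(1|1)) with indices in {1,2} to the generators of Y(gl(M|N)) with the corresponding indices in {M, M+1} (i.e. t^1_1[n] ↦ t^M_M[n], t^1_2[n] ↦ t^M_{M+1}[n], t^2_1[n] ↦ t^{M+1}_M[n],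 t^2_2[n] ↦ t^{M+1}_{M+1}[n]) extends to an injective unital ℂ-algebra homomorphism Y(gl(1|1)) → Y(gl(M|N)). Here each source algebra is the super Yangian for the corresponding pair of parameters, defined by the same presentation. -/
/-!
Each of the three maps is induced by an injection `e` of index sets which preserves parity. With
the convention `t^a_b[0] = (-1)^{[a]} δ^a_b` the defining relations are equivalent to the RTT
relation `RTT`, which only involves the indices occurring in it and their parities; so
`t^a_b[n] ↦ t^{e a}_{e b}[n]` is a homomorphism, and only injectivity needs an argument. It follows
from a Poincaré-Birkhoff-Witt theorem for the super Yangian, for an arbitrary order of the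
generators: the normal words (weakly increasing, with odd letters not repeated) form a basis. If
the order on the source is pulled back from the target, normal words go to distinct normal words.

Normal words span (`span_normal`), since letters supercommute up to words of smaller total
degree, where `t^a_b[n]` has degree `n`.

For independence (`normal_linearIndependent`), tensoring with the evaluation representation on
matrices over `ℂ[z]` gives a homomorphism `Δ : A → A ⊗ Mat[z]` (`exists_coproduct`). The tensor
product of superalgebras is realised in the ordinary tensor product by inserting powers of the
grading operator `kd` in the matrix leg. The leading terms of `Δ (t^a_b[d+1])` are
`t^a_b[d+1] ⊗ kd` and `1 ⊗ z^d E^a_b`. The functional `fg (a, b, d)` on the matrix leg reads off the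
coefficient of `z^d E^a_b`; it vanishes on the powers of `kd` because a trivial summand with the
same grading is added to the representation and subtracted by the functional. Iterating `Δ` and
applying `fg g₁`, `fg g₂`, … gives a functional `ell` attached to a word `g₁ g₂ …`. It vanishes
on words of smaller degree (now with `t^a_b[n]` of degree `n - 1`), on words of the same degree and smaller
length, and on words of the same degree and length which are not rearrangements (`ell_kill`,
`ell_perm`), and it does not vanish on the word itself if that word is normal (`ell_normal`). Hence
the `ell` separate the normal words triangularly.
-/

open scoped BigOperators TensorProduct

namespace SY

/-! ### The defining relations as an RTT relation -/

section Relations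

variable {M N : ℕ} {B : Type*} [Ring B] [Algebra ℂ B]

/-- The sign `(-1)^{[a]}`. -/
noncomputable def eps (M : ℕ) {k : ℕ} (a : Fin k) : ℂ := (-1 : ℂ) ^ pa M a

lemma pa_eq (M : ℕ) {k : ℕ} (a : Fin k) : pa M a = 0 ∨ pa M a = 1 := by
  unfold pa; split_ifs <;> simp

/-- The supercommutator of `x^{a1}_{b1}[m]` and `x^{a2}_{b2}[n]`. -/
noncomputable def qb (x : Fin (M + N) → Fin (M + N) → ℕ → B) (a1 b1 a2 b2 : Fin (M + N))
    (m n : ℕ) : B :=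
  x a1 b1 m * x a2 b2 n - sgn1 M a1 b1 a2 b2 • (x a2 b2 n * x a1 b1 m)

/-- The quadratic expression `x^{a2}_{b1}[r] x^{a1}_{b2}[s] - x^{a2}_{b1}[s] x^{a1}_{b2}[r]` on the
right-hand side of the relations. -/
def xb (x : Fin (M + N) → Fin (M + N) → ℕ → B) (a1 b1 a2 b2 : Fin (M + N))
    (r s : ℕ) : B :=
  x a2 b1 r * x a1 b2 s - x a2 b1 s * x a1 b2 r

/-- The RTT relation, written for the coefficients `x^a_b[n]`, `n ≥ 0`, of a matrix of formal
power series in `u⁻¹`. -/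
def RTT (x : Fin (M + N) → Fin (M + N) → ℕ → B) : Prop :=
  ∀ a1 b1 a2 b2 m n, qb x a1 b1 a2 b2 (m + 1) n - qb x a1 b1 a2 b2 m (n + 1)
    = sgn2 M a1 b1 a2 • xb x a1 b1 a2 b2 m n

/-- The zeroth coefficient which makes the linear terms of the defining relations of the super
Yangian the `r = 0` terms of its quadratic sum: `x^a_b[0] = (-1)^{[a]} δ^a_b`. -/
def Unit0 (x : Fin (M + N) → Fin (M + N) → ℕ → B) : Prop :=
  ∀ a b, x a b 0 = if a = b then eps M a • (1 : B) else 0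

lemma xb_antisymm {B : Type*} [Ring B] (x : Fin (M + N) → Fin (M + N) → ℕ → B)
    (a1 b1 a2 b2 : Fin (M + N)) (r s : ℕ) :
    xb x a1 b1 a2 b2 r s = - xb x a1 b1 a2 b2 s r := by
  simp [xb]

/-- A diagonal generator `x^a_a` is even, so supercommutators with it are commutators. -/
lemma sgn1_diag_left {k : ℕ} (a c d : Fin k) : sgn1 M a a c d = 1 := by
  rcases pa_eq M a with h | h <;> rcases pa_eq M c with h' | h' <;>
    rcases pa_eq M d with h'' | h'' <;> norm_num [sgn1, h, h', h'']

lemma sgn1_diag_right {k : ℕ} (a c d : Fin k) : sgn1 M c d a a = 1 := by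
  rcases pa_eq M a with h | h <;> rcases pa_eq M c with h' | h' <;>
    rcases pa_eq M d with h'' | h'' <;> norm_num [sgn1, h, h', h'']

lemma qb_zero_left {x : Fin (M + N) → Fin (M + N) → ℕ → B} {a1 b1 : Fin (M + N)} {z : ℂ}
    (h : x a1 b1 0 = if a1 = b1 then z • (1 : B) else 0) (a2 b2 : Fin (M + N)) (n : ℕ) :
    qb x a1 b1 a2 b2 0 n = 0 := by
  unfold qb
  rw [h]
  split_ifs with hab
  · subst hab; simp [sgn1_diag_left]
  · simp

lemma qb_zero_right {x : Fin (M + N) → Fin (M + N) → ℕ → B} {a2 b2 : Fin (M + N)} {z : ℂ}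
    (h : x a2 b2 0 = if a2 = b2 then z • (1 : B) else 0) (a1 b1 : Fin (M + N)) (n : ℕ) :
    qb x a1 b1 a2 b2 n 0 = 0 := by
  unfold qb
  rw [h]
  split_ifs with hab
  · subst hab; simp [sgn1_diag_right]
  · simp

/-- Telescoping the RTT relation down to `x[0]` on either side. -/
lemma RTT.qb_eq {x : Fin (M + N) → Fin (M + N) → ℕ → B} (hx : RTT x) (h0 : Unit0 x)
    (a1 b1 a2 b2 : Fin (M + N)) (m n : ℕ) :
    qb x a1 b1 a2 b2 m n = sgn2 M a1 b1 a2 •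
      ∑ r ∈ Finset.range (min m n), xb x a1 b1 a2 b2 r (m + n - 1 - r) := by
  have left : ∀ m n, qb x a1 b1 a2 b2 m n = sgn2 M a1 b1 a2 •
      ∑ r ∈ Finset.range m, xb x a1 b1 a2 b2 r (m + n - 1 - r) := by
    intro m
    induction m with
    | zero => intro n; simpa using qb_zero_left (h0 a1 b1) a2 b2 n
    | succ m ih =>
      intro n
      have h := hx a1 b1 a2 b2 m n
      rw [ih, sub_eq_iff_eq_add] at h
      rw [h, Finset.sum_range_succ, smul_add, add_comm]
      have e1 : m + (n + 1) - 1 = m + 1 + n - 1 := by omega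
      have e2 : m + 1 + n - 1 - m = n := by omega
      rw [e1, e2]
  have right : ∀ n m, qb x a1 b1 a2 b2 m n = sgn2 M a1 b1 a2 •
      ∑ r ∈ Finset.range n, xb x a1 b1 a2 b2 r (m + n - 1 - r) := by
    intro n
    induction n with
    | zero => intro m; simpa using qb_zero_right (h0 a2 b2) a1 b1 m
    | succ n ih =>
      intro m
      have h := hx a1 b1 a2 b2 m n
      rw [ih, xb_antisymm] at h
      rw [Finset.sum_range_succ, smul_add]
      have e1 : m + (n + 1) - 1 = m + 1 + n - 1 := by omega
      have e2 : m + 1 + n - 1 - n = m := by omega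
      rw [e1, e2]
      rw [smul_neg] at h
      linear_combination (norm := module) (-1 : ℂ) • h
  rcases le_total m n with h | h
  · rw [min_eq_left h]; exact left m n
  · rw [min_eq_right h]; exact right n m

lemma sgn2_fst {k : ℕ} (a1 b1 : Fin k) : sgn2 M a1 b1 b1 * eps M b1 = 1 := by
  rcases pa_eq M a1 with h | h <;> rcases pa_eq M b1 with h' | h' <;>
    norm_num [sgn2, eps, h, h']

lemma sgn2_snd {k : ℕ} (a1 b1 a2 : Fin k) : sgn2 M a1 b1 a2 * eps M a1 = sgn1 M a1 b1 a2 a1 := by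
  rcases pa_eq M a1 with h | h <;> rcases pa_eq M b1 with h2 | h2 <;>
    rcases pa_eq M a2 with h3 | h3 <;> norm_num [sgn2, sgn1, eps, h, h2, h3]

/-- The linear terms of the defining relations are the `r = 0` term of the quadratic sum. -/
lemma xb_zero {x : Fin (M + N) → Fin (M + N) → ℕ → B} (h0 : Unit0 x)
    (a1 b1 a2 b2 : Fin (M + N)) (s : ℕ) :
    sgn2 M a1 b1 a2 • xb x a1 b1 a2 b2 0 s =
      (if b1 = a2 then x a1 b2 s else 0)
          - sgn1 M a1 b1 a2 b2 • (if b2 = a1 then x a2 b1 s else 0) := by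
  unfold xb
  rw [h0, h0, smul_sub]
  congr 1
  · by_cases h : b1 = a2
    · subst h; simp [smul_smul, sgn2_fst]
    · simp [h, Ne.symm h]
  · by_cases h : b2 = a1
    · subst h; simp [smul_smul, sgn2_snd]
    · simp [h, Ne.symm h]

/-- The right-hand side of the defining relations as a single sum from `r = 0`. -/
lemma rhs_eq {x : Fin (M + N) → Fin (M + N) → ℕ → B} (h0 : Unit0 x)
    (a1 b1 a2 b2 : Fin (M + N)) {m n : ℕ} (hm : 1 ≤ m) (hn : 1 ≤ n) :
    sgn2 M a1 b1 a2 • ∑ r ∈ Finset.range (min m n), xb x a1 b1 a2 b2 r (m + n - 1 - r) =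
      (if b1 = a2 then x a1 b2 (m + n - 1) else 0)
          - sgn1 M a1 b1 a2 b2 • (if b2 = a1 then x a2 b1 (m + n - 1) else 0)
          + sgn2 M a1 b1 a2 •
              ∑ r ∈ Finset.Ico 1 (min m n),
                (x a2 b1 r * x a1 b2 (m + n - 1 - r)
                  - x a2 b1 (m + n - 1 - r) * x a1 b2 r) := by
  rw [Finset.range_eq_Ico, Finset.sum_eq_sum_Ico_succ_bot (by omega), smul_add,
    Nat.sub_zero, xb_zero h0]
  rfl

/-- The image of the right-hand side of a defining relation. -/
lemma map_rhs (f : F M N →ₐ[ℂ] B) {x : Fin (M + N) → Fin (M + N) → ℕ → B}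
    (key : ∀ a b n, 1 ≤ n → f (T M N a b n) = x a b n)
    (a1 b1 a2 b2 : Fin (M + N)) {m n : ℕ} (hm : 1 ≤ m) (hn : 1 ≤ n) :
    f ((if b1 = a2 then T M N a1 b2 (m + n - 1) else 0)
          - sgn1 M a1 b1 a2 b2 • (if b2 = a1 then T M N a2 b1 (m + n - 1) else 0)
          + sgn2 M a1 b1 a2 •
              ∑ r ∈ Finset.Ico 1 (min m n),
                (T M N a2 b1 r * T M N a1 b2 (m + n - 1 - r)
                  - T M N a2 b1 (m + n - 1 - r) * T M N a1 b2 r)) =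
      (if b1 = a2 then x a1 b2 (m + n - 1) else 0)
          - sgn1 M a1 b1 a2 b2 • (if b2 = a1 then x a2 b1 (m + n - 1) else 0)
          + sgn2 M a1 b1 a2 •
              ∑ r ∈ Finset.Ico 1 (min m n),
                (x a2 b1 r * x a1 b2 (m + n - 1 - r)
                  - x a2 b1 (m + n - 1 - r) * x a1 b2 r) := by
  simp only [map_sub, map_add, map_mul, map_smul, map_sum, apply_ite f, map_zero]
  rw [key _ _ _ (by omega), key _ _ _ (by omega)]
  congr 2
  refine Finset.sum_congr rfl fun r hr => ?_
  rw [Finset.mem_Ico] at hr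
  rw [key _ _ _ (by omega), key _ _ _ (by omega), key _ _ _ (by omega), key _ _ _ (by omega)]

/-- A family satisfying the RTT relation and the normalisation of `x[0]` defines a homomorphism
from the super Yangian. -/
lemma exists_hom_of_RTT {x : Fin (M + N) → Fin (M + N) → ℕ → B} (hx : RTT x) (h0 : Unit0 x) :
    ∃ f : Y M N →ₐ[ℂ] B, ∀ g : Gen M N, f (tg M N g) = x g.1 g.2.1 (g.2.2 + 1) := by
  have key : ∀ a b n, 1 ≤ n → FreeAlgebra.lift ℂ (fun g : Gen M N => x g.1 g.2.1 (g.2.2 + 1))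
      (T M N a b n) = x a b n := by
    intro a b n hn
    simp [T, Nat.sub_add_cancel hn]
  refine ⟨RingQuot.liftAlgHom ℂ ⟨FreeAlgebra.lift ℂ (fun g : Gen M N => x g.1 g.2.1 (g.2.2 + 1)),
    ?_⟩, ?_⟩
  · rintro _ _ ⟨a1, b1, a2, b2, m, n, hm, hn⟩
    have h := (hx.qb_eq h0 a1 b1 a2 b2 m n).trans (rhs_eq h0 a1 b1 a2 b2 hm hn)
    unfold qb at h
    rw [map_rhs _ key _ _ _ _ hm hn, map_sub, map_smul, map_mul, map_mul, key _ _ _ hm,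
      key _ _ _ hn, h]
  · intro g
    simp [tg]

/-- The generators of the super Yangian, completed by `t^a_b[0] = (-1)^{[a]} δ^a_b`. -/
noncomputable def ty (M N : ℕ) (a b : Fin (M + N)) : ℕ → Y M N
  | 0 => if a = b then eps M a • 1 else 0
  | n + 1 => tg M N (a, b, n)

lemma ty_unit0 : Unit0 (ty M N) := fun _ _ => rfl

lemma t_eq_ty (a b : Fin (M + N)) {n : ℕ} (hn : 1 ≤ n) : t M N a b n = ty M N a b n := by
  obtain ⟨n, rfl⟩ := Nat.exists_eq_add_of_le' hn
  rfl

/-- The defining relations in terms of `ty`. -/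
lemma ty_rel (a1 b1 a2 b2 : Fin (M + N)) {m n : ℕ} (hm : 1 ≤ m) (hn : 1 ≤ n) :
    qb (ty M N) a1 b1 a2 b2 m n =
      (if b1 = a2 then ty M N a1 b2 (m + n - 1) else 0)
          - sgn1 M a1 b1 a2 b2 • (if b2 = a1 then ty M N a2 b1 (m + n - 1) else 0)
          + sgn2 M a1 b1 a2 •
              ∑ r ∈ Finset.Ico 1 (min m n),
                (ty M N a2 b1 r * ty M N a1 b2 (m + n - 1 - r)
                  - ty M N a2 b1 (m + n - 1 - r) * ty M N a1 b2 r) := by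
  have h := RingQuot.mkAlgHom_rel ℂ (Rel.defining a1 b1 a2 b2 m n hm hn)
  have key : ∀ a b n, 1 ≤ n → RingQuot.mkAlgHom ℂ (Rel M N) (T M N a b n) = ty M N a b n :=
    fun a b n hn => t_eq_ty a b hn
  have h2 := h.symm.trans (map_sub (RingQuot.mkAlgHom ℂ (Rel M N)) _ _)
  rw [map_smul, map_mul, map_mul, key _ _ _ hm, key _ _ _ hn] at h2
  exact h2.symm.trans (map_rhs _ key _ _ _ _ hm hn)

/-- Conversely, the defining relations imply the RTT relation. -/
lemma RTT.of_rel {x : Fin (M + N) → Fin (M + N) → ℕ → B} (h0 : Unit0 x)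
    (hx : ∀ (a1 b1 a2 b2 : Fin (M + N)) (m n : ℕ), 1 ≤ m → 1 ≤ n → qb x a1 b1 a2 b2 m n =
      (if b1 = a2 then x a1 b2 (m + n - 1) else 0)
          - sgn1 M a1 b1 a2 b2 • (if b2 = a1 then x a2 b1 (m + n - 1) else 0)
          + sgn2 M a1 b1 a2 •
              ∑ r ∈ Finset.Ico 1 (min m n),
                (x a2 b1 r * x a1 b2 (m + n - 1 - r)
                  - x a2 b1 (m + n - 1 - r) * x a1 b2 r)) : RTT x := by
  have hq : ∀ (a1 b1 a2 b2 : Fin (M + N)) (m n : ℕ), qb x a1 b1 a2 b2 m n = sgn2 M a1 b1 a2 •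
      ∑ r ∈ Finset.range (min m n), xb x a1 b1 a2 b2 r (m + n - 1 - r) := by
    intro a1 b1 a2 b2 m n
    rcases Nat.eq_zero_or_pos m with rfl | hm
    · simpa using qb_zero_left (h0 a1 b1) a2 b2 n
    rcases Nat.eq_zero_or_pos n with rfl | hn
    · simpa using qb_zero_right (h0 a2 b2) a1 b1 m
    rw [rhs_eq h0 _ _ _ _ hm hn, hx _ _ _ _ _ _ hm hn]
  intro a1 b1 a2 b2 m n
  rw [hq, hq, ← smul_sub]
  congr 1
  have e1 : m + (n + 1) - 1 = m + n := by omega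
  have e2 : m + 1 + n - 1 = m + n := by omega
  rw [e1, e2]
  rcases lt_trichotomy m n with h | rfl | h
  · rw [min_eq_left (by omega), min_eq_left (by omega), Finset.sum_range_succ]
    simp
  · simp [xb]
  · rw [min_eq_right (by omega), min_eq_right (by omega), Finset.sum_range_succ,
      xb_antisymm _ _ _ _ _ m n]
    simp

lemma ty_RTT : RTT (ty M N) :=
  RTT.of_rel ty_unit0 fun a1 b1 a2 b2 _ _ hm hn => ty_rel a1 b1 a2 b2 hm hn

lemma adjoin_tg : Algebra.adjoin ℂ (Set.range (tg M N)) = ⊤ := by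
  have h1 : Set.range (tg M N)
      = RingQuot.mkAlgHom ℂ (Rel M N) '' Set.range (FreeAlgebra.ι ℂ : Gen M N → F M N) := by
    rw [← Set.range_comp]; rfl
  rw [h1, ← AlgHom.map_adjoin, FreeAlgebra.adjoin_range_ι, Algebra.map_top,
    AlgHom.range_eq_top]
  exact RingQuot.mkAlgHom_surjective ℂ (Rel M N)

/-- The properties of the super Yangian used below, for an arbitrary algebra `A` with a family
`τ^a_b[n]`: the relations, the universal property, and generation by the `τ^a_b[n]`. -/
structure IsYangian (M N : ℕ) (A : Type) [Ring A] [Algebra ℂ A]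
    (τ : Fin (M + N) → Fin (M + N) → ℕ → A) : Prop where
  rtt : RTT τ
  unit0 : Unit0 τ
  lift : ∀ (B : Type) [Ring B] [Algebra ℂ B] (x : Fin (M + N) → Fin (M + N) → ℕ → B),
    RTT x → Unit0 x → ∃ f : A →ₐ[ℂ] B, ∀ a b n, f (τ a b n) = x a b n
  gen : Algebra.adjoin ℂ (Set.range fun g : Gen M N => τ g.1 g.2.1 (g.2.2 + 1)) = ⊤

lemma isYangian_Y : IsYangian M N (Y M N) (ty M N) where
  rtt := ty_RTT
  unit0 := ty_unit0
  lift B _ _ x hx h0 := by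
    obtain ⟨f, hf⟩ := exists_hom_of_RTT hx h0
    refine ⟨f, fun a b n => ?_⟩
    cases n with
    | zero =>
      rw [h0, ty]
      split_ifs
      · exact (map_smul f _ _).trans (by rw [map_one])
      · exact map_zero f
    | succ n => exact hf (a, b, n)
  gen := adjoin_tg

end Relations

/-! ### Tensoring with a one-site evaluation representation -/

section Coproduct

variable {M N : ℕ}

/-- Moving the grading operators past the left factor. -/
lemma term_mul {S : Type*} [Ring S] [Algebra ℂ S] {s : ℂ} {x k y x' k' y' : S}
    (hkx : k * x' = s • (x' * k)) (hyx : Commute y x') (hyk : Commute y k') :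
    (x * k * y) * (x' * k' * y') = s • (x * x' * (k * k') * (y * y')) := by
  calc (x * k * y) * (x' * k' * y') = x * k * (y * x') * k' * y' := by simp only [mul_assoc]
    _ = x * (k * x') * (y * k') * y' := by rw [hyx.eq]; simp only [mul_assoc]
    _ = s • (x * x' * (k * k') * (y * y')) := by
      rw [hkx, hyk.eq]; simp only [mul_assoc, mul_smul_comm, smul_mul_assoc]

/-- If two matrices `x` and `y` satisfy the RTT relation and have supercommuting entries, their
product satisfies the RTT relation. Supercommutation is realised in an ordinary algebra: entries of
`x` and `y` commute, and the factor `k c b` between them implements the parity of `y^c_b` on `x`.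
The indices `1`, `2` on `x` and `y` stand for the spectral parameters `u`, `v`, and `U`, `V` are
proportional to `u - v` and `1`. -/
lemma rtt_mul {S : Type*} [Ring S] [Algebra ℂ S] {U V : S}
    {x1 x2 y1 y2 k : Fin (M + N) → Fin (M + N) → S}
    (hU : ∀ s, Commute U s) (hV : ∀ s, Commute V s)
    (hx : ∀ a1 b1 a2 b2, U * (x1 a1 b1 * x2 a2 b2 - sgn1 M a1 b1 a2 b2 • (x2 a2 b2 * x1 a1 b1)) =
      V * (sgn2 M a1 b1 a2 • (x1 a2 b1 * x2 a1 b2 - x2 a2 b1 * x1 a1 b2)))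
    (hy : ∀ a1 b1 a2 b2, U * (y1 a1 b1 * y2 a2 b2 - sgn1 M a1 b1 a2 b2 • (y2 a2 b2 * y1 a1 b1)) =
      V * (sgn2 M a1 b1 a2 • (y1 a2 b1 * y2 a1 b2 - y2 a2 b1 * y1 a1 b2)))
    (hk1 : ∀ c b a d, k c b * x1 a d = sgn1 M c b a d • (x1 a d * k c b))
    (hk2 : ∀ c b a d, k c b * x2 a d = sgn1 M c b a d • (x2 a d * k c b))
    (hkk : ∀ c1 b1 c2 b2, k c1 b1 * k c2 b2 = k c2 b2 * k c1 b1)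
    (hkk' : ∀ c1 b1 c2 b2, k c1 b1 * k c2 b2 = k c2 b1 * k c1 b2)
    (h12 : ∀ a b c d, Commute (y1 a b) (x2 c d))
    (h21 : ∀ a b c d, Commute (y2 a b) (x1 c d))
    (hky1 : ∀ a b c d, Commute (y1 a b) (k c d)) (hky2 : ∀ a b c d, Commute (y2 a b) (k c d))
    {z1 z2 : Fin (M + N) → Fin (M + N) → S}
    (hz1 : ∀ a b, z1 a b = ∑ c, x1 a c * k c b * y1 c b)
    (hz2 : ∀ a b, z2 a b = ∑ c, x2 a c * k c b * y2 c b) (a1 b1 a2 b2 : Fin (M + N)) :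
    U * (z1 a1 b1 * z2 a2 b2 - sgn1 M a1 b1 a2 b2 • (z2 a2 b2 * z1 a1 b1)) =
      V * (sgn2 M a1 b1 a2 • (z1 a2 b1 * z2 a1 b2 - z2 a2 b1 * z1 a1 b2)) := by
  -- `Z c1 c2` collects the terms that cancel against each other when `c1` and `c2` are exchanged.
  set Z : Fin (M + N) → Fin (M + N) → S := fun c1 c2 =>
    (sgn2 M a1 b1 a2 * sgn1 M c1 b1 a1 c2) • (V * (x2 a2 c1 * x1 a1 c2 * (k c1 b1 * k c2 b2) *
      (y1 c1 b1 * y2 c2 b2 - y2 c1 b1 * y1 c2 b2))) with hZ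
  have e1 : z1 a1 b1 * z2 a2 b2 = ∑ c1, ∑ c2, sgn1 M c1 b1 a2 c2 •
      (x1 a1 c1 * x2 a2 c2 * (k c1 b1 * k c2 b2) * (y1 c1 b1 * y2 c2 b2)) := by
    rw [hz1, hz2, Finset.sum_mul_sum]
    exact Finset.sum_congr rfl fun c1 _ => Finset.sum_congr rfl fun c2 _ =>
      term_mul (hk2 _ _ _ _) (h12 _ _ _ _) (hky1 _ _ _ _)
  have e2 : z2 a2 b2 * z1 a1 b1 = ∑ c1, ∑ c2, sgn1 M c2 b2 a1 c1 •
      (x2 a2 c2 * x1 a1 c1 * (k c1 b1 * k c2 b2) * (y2 c2 b2 * y1 c1 b1)) := by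
    rw [hz1, hz2, Finset.sum_mul_sum, Finset.sum_comm]
    refine Finset.sum_congr rfl fun c1 _ => Finset.sum_congr rfl fun c2 _ => ?_
    rw [term_mul (hk1 _ _ _ _) (h21 _ _ _ _) (hky2 _ _ _ _), hkk c1]
  have e3 : z1 a2 b1 * z2 a1 b2 = ∑ c1, ∑ c2, sgn1 M c1 b1 a1 c2 •
      (x1 a2 c1 * x2 a1 c2 * (k c1 b1 * k c2 b2) * (y1 c1 b1 * y2 c2 b2)) := by
    rw [hz1, hz2, Finset.sum_mul_sum]
    exact Finset.sum_congr rfl fun c1 _ => Finset.sum_congr rfl fun c2 _ =>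
      term_mul (hk2 _ _ _ _) (h12 _ _ _ _) (hky1 _ _ _ _)
  have e4 : z2 a2 b1 * z1 a1 b2 = ∑ c1, ∑ c2, sgn1 M c1 b1 a1 c2 •
      (x2 a2 c1 * x1 a1 c2 * (k c1 b1 * k c2 b2) * (y2 c1 b1 * y1 c2 b2)) := by
    rw [hz1, hz2, Finset.sum_mul_sum]
    exact Finset.sum_congr rfl fun c1 _ => Finset.sum_congr rfl fun c2 _ =>
      term_mul (hk1 _ _ _ _) (h21 _ _ _ _) (hky2 _ _ _ _)
  have hsum : ∑ c1, ∑ c2, (Z c2 c1 - Z c1 c2) = 0 := by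
    simp only [Finset.sum_sub_distrib]
    rw [Finset.sum_comm, sub_self]
  rw [← sub_eq_zero, e1, e2, e3, e4, ← hsum]
  simp only [Finset.mul_sum, Finset.smul_sum, ← Finset.sum_sub_distrib]
  refine Finset.sum_congr rfl fun c1 _ => Finset.sum_congr rfl fun c2 _ => ?_
  have s1 : sgn1 M c1 b1 a2 c2 * sgn2 M a1 c1 a2 = sgn2 M a1 b1 a2 * sgn1 M c1 b1 a1 c2 := by
    rcases pa_eq M a1 with h1 | h1 <;> rcases pa_eq M a2 with h2 | h2 <;>
    rcases pa_eq M b1 with h3 | h3 <;> rcases pa_eq M c1 with h4 | h4 <;>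
    rcases pa_eq M c2 with h5 | h5 <;> norm_num [sgn1, sgn2, h1, h2, h3, h4, h5]
  have s2 : sgn1 M c1 b1 a2 c2 * sgn1 M a1 c1 a2 c2 * sgn1 M c1 b1 c2 b2 =
      sgn1 M a1 b1 a2 b2 * sgn1 M c2 b2 a1 c1 := by
    rcases pa_eq M a1 with h1 | h1 <;> rcases pa_eq M a2 with h2 | h2 <;>
    rcases pa_eq M b1 with h3 | h3 <;> rcases pa_eq M c1 with h4 | h4 <;>
    rcases pa_eq M c2 with h5 | h5 <;> rcases pa_eq M b2 with h6 | h6 <;>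
    norm_num [sgn1, h1, h2, h3, h4, h5, h6]
  have s3 : sgn1 M c1 b1 a2 c2 * sgn1 M a1 c1 a2 c2 * sgn2 M c1 b1 c2 =
      sgn2 M a1 b1 a2 * sgn1 M c2 b1 a1 c1 := by
    rcases pa_eq M a1 with h1 | h1 <;> rcases pa_eq M a2 with h2 | h2 <;>
    rcases pa_eq M b1 with h3 | h3 <;> rcases pa_eq M c1 with h4 | h4 <;>
    rcases pa_eq M c2 with h5 | h5 <;> norm_num [sgn1, sgn2, h1, h2, h3, h4, h5]
  -- The relation for `x`, multiplied on the right.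
  have hx' := congrArg (fun s => s * ((k c1 b1 * k c2 b2) * (y1 c1 b1 * y2 c2 b2)))
    (hx a1 c1 a2 c2)
  -- The relation for `y`, multiplied on the left.
  have hy' := congrArg (fun s => (x2 a2 c2 * x1 a1 c1 * (k c1 b1 * k c2 b2)) * s)
    (hy c1 b1 c2 b2)
  simp only [← mul_assoc _ U, ← mul_assoc _ V, ← (hU _).eq, ← (hV _).eq] at hy'
  simp only [hZ]
  rw [hkk' c2 b1 c1 b2]
  simp only [mul_sub, sub_mul, mul_smul_comm, smul_mul_assoc, smul_sub, smul_smul, mul_assoc]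
    at hx' hy' ⊢
  rw [← s1, ← s2, ← s3]
  linear_combination (norm := module) (sgn1 M c1 b1 a2 c2) • hx' +
    (sgn1 M c1 b1 a2 c2 * sgn1 M a1 c1 a2 c2) • hy'

open PowerSeries in
lemma coeff_coeff_mul {B : Type*} [Ring B] (f g : B⟦X⟧) (m n : ℕ) :
    coeff m (coeff n (C f * map (C (R := B)) g)) = coeff m f * coeff n g := by
  simp

open PowerSeries in
lemma coeff_coeff_mul' {B : Type*} [Ring B] (f g : B⟦X⟧) (m n : ℕ) :
    coeff m (coeff n (map (C (R := B)) g * C f)) = coeff n g * coeff m f := by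
  simp

open PowerSeries in
lemma coeff_csmul {B : Type*} [Ring B] [Algebra ℂ B] (c : ℂ) (f : B⟦X⟧) (n : ℕ) :
    coeff n (c • f) = c • coeff n f := by
  simp

open PowerSeries in
/-- The coefficientwise RTT relation as an identity of power series in two variables. In
terms of `w₁ = u⁻¹` and `w₂ = v⁻¹`, the factor `u - v` becomes `w₂ - w₁` and `1` becomes
`w₁ w₂`. -/
lemma rtt_iff_series {B : Type*} [Ring B] [Algebra ℂ B]
    (f : Fin (M + N) → Fin (M + N) → B⟦X⟧)
    (h0 : ∀ a b, ∃ z : ℂ, coeff 0 (f a b) = if a = b then z • (1 : B) else 0) :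
    RTT (fun a b n => coeff n (f a b)) ↔ ∀ a1 b1 a2 b2,
    (X - C X) * (C (f a1 b1) * map (C (R := B)) (f a2 b2) -
        sgn1 M a1 b1 a2 b2 • (map (C (R := B)) (f a2 b2) * C (f a1 b1))) =
      (X * C X) * (sgn2 M a1 b1 a2 • (C (f a2 b1) * map (C (R := B)) (f a1 b2) -
        map (C (R := B)) (f a2 b1) * C (f a1 b2))) := by
  have hL : ∀ a1 b1 a2 b2 m n, coeff m (coeff n (C (f a1 b1) * map (C (R := B)) (f a2 b2) -
        sgn1 M a1 b1 a2 b2 • (map (C (R := B)) (f a2 b2) * C (f a1 b1)))) =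
      qb (fun a b n => coeff n (f a b)) a1 b1 a2 b2 m n := by
    intro a1 b1 a2 b2 m n
    rw [map_sub, map_sub, coeff_csmul, coeff_csmul, coeff_coeff_mul, coeff_coeff_mul', qb]
  have hR : ∀ a1 b1 a2 b2 m n, coeff m (coeff n (sgn2 M a1 b1 a2 •
      (C (f a2 b1) * map (C (R := B)) (f a1 b2) - map (C (R := B)) (f a2 b1) * C (f a1 b2)))) =
      sgn2 M a1 b1 a2 • xb (fun a b n => coeff n (f a b)) a1 b1 a2 b2 m n := by
    intro a1 b1 a2 b2 m n
    rw [coeff_csmul, coeff_csmul, map_sub, map_sub, coeff_coeff_mul, coeff_coeff_mul', xb]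
  have hz1 : ∀ a1 b1 a2 b2 n, qb (fun a b n => coeff n (f a b)) a1 b1 a2 b2 0 n = 0 := by
    intro a1 b1 a2 b2 n
    obtain ⟨z, hz⟩ := h0 a1 b1
    exact qb_zero_left (x := fun a b n => coeff n (f a b)) hz a2 b2 n
  have hz2 : ∀ a1 b1 a2 b2 n, qb (fun a b n => coeff n (f a b)) a1 b1 a2 b2 n 0 = 0 := by
    intro a1 b1 a2 b2 n
    obtain ⟨z, hz⟩ := h0 a2 b2
    exact qb_zero_right (x := fun a b n => coeff n (f a b)) hz a1 b1 n
  constructor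
  · intro h a1 b1 a2 b2
    ext n m
    rcases n with _ | n <;> rcases m with _ | m
    · simp [sub_mul, mul_assoc, -map_sub, map_sub (coeff _)]
    · rw [sub_mul, mul_assoc, map_sub, map_sub, coeff_zero_X_mul, coeff_C_mul, coeff_succ_X_mul,
        hL, hz2, coeff_zero_X_mul]
      simp
    · rw [sub_mul, mul_assoc, map_sub, map_sub, coeff_succ_X_mul, coeff_C_mul, coeff_zero_X_mul,
        hL, hz1, coeff_succ_X_mul, coeff_C_mul, coeff_zero_X_mul]
      simp
    · rw [sub_mul, mul_assoc, map_sub, map_sub, coeff_succ_X_mul, coeff_C_mul, coeff_succ_X_mul,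
        hL, hL, coeff_succ_X_mul, coeff_C_mul, coeff_succ_X_mul, hR]
      exact h a1 b1 a2 b2 m n
  · intro h a1 b1 a2 b2 m n
    have := congrArg (fun F => coeff (m + 1) (coeff (n + 1) F)) (h a1 b1 a2 b2)
    beta_reduce at this
    rw [sub_mul, mul_assoc, map_sub, map_sub, coeff_succ_X_mul, coeff_C_mul, coeff_succ_X_mul,
        hL, hL, coeff_succ_X_mul, coeff_C_mul, coeff_succ_X_mul, hR] at this
    exact this

open PowerSeries in
/-- Coefficientwise form of `rtt_mul`. -/
lemma RTT.mul {B : Type*} [Ring B] [Algebra ℂ B]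
    {x y : Fin (M + N) → Fin (M + N) → ℕ → B} {k : Fin (M + N) → Fin (M + N) → B}
    (hx : RTT x) (hy : RTT y)
    (hx0 : ∀ a b, ∃ z : ℂ, x a b 0 = if a = b then z • (1 : B) else 0)
    (hy0 : ∀ a b, ∃ z : ℂ, y a b 0 = if a = b then z • (1 : B) else 0)
    (hk0 : ∀ a, k a a = 1)
    (hk : ∀ c b a d n, k c b * x a d n = sgn1 M c b a d • (x a d n * k c b))
    (hkk : ∀ c1 b1 c2 b2, k c1 b1 * k c2 b2 = k c2 b2 * k c1 b1)
    (hkk' : ∀ c1 b1 c2 b2, k c1 b1 * k c2 b2 = k c2 b1 * k c1 b2)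
    (hyx : ∀ a b c d m n, Commute (y a b m) (x c d n))
    (hky : ∀ a b c d n, Commute (y a b n) (k c d)) :
    RTT (fun a b n => ∑ c, ∑ p ∈ Finset.HasAntidiagonal.antidiagonal n,
      x a c p.1 * k c b * y c b p.2) := by
  set xs : Fin (M + N) → Fin (M + N) → B⟦X⟧ := fun a b => mk (x a b) with hxs
  set ys : Fin (M + N) → Fin (M + N) → B⟦X⟧ := fun a b => mk (y a b) with hys
  set zs : Fin (M + N) → Fin (M + N) → B⟦X⟧ := fun a b => ∑ c, xs a c * C (k c b) * ys c b
    with hzs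
  have hcoe : (fun a b n => ∑ c, ∑ p ∈ Finset.HasAntidiagonal.antidiagonal n,
      x a c p.1 * k c b * y c b p.2) =
      fun a b n => coeff n (zs a b) := by
    funext a b n
    simp only [hzs, map_sum]
    refine Finset.sum_congr rfl fun c _ => ?_
    rw [coeff_mul]
    refine Finset.sum_congr rfl fun p _ => ?_
    simp [hxs, hys]
  have hxe : x = fun a b n => coeff n (xs a b) := by funext a b n; simp [hxs]
  have hye : y = fun a b n => coeff n (ys a b) := by funext a b n; simp [hys]
  have hz0 : ∀ a b, ∃ z : ℂ, coeff 0 (zs a b) = if a = b then z • (1 : B) else 0 := by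
    intro a b
    choose zx hzx using hx0
    choose zy hzy using hy0
    refine ⟨zx a a * zy a a, ?_⟩
    have : coeff 0 (zs a b) = ∑ c, x a c 0 * k c b * y c b 0 := by
      rw [← congrFun (congrFun (congrFun hcoe a) b) 0]; simp
    rw [this, Finset.sum_eq_single a]
    · rw [hzx, hzy]
      split_ifs with h1 h2 h2
      · subst h2; simp [hk0, smul_smul, mul_comm]
      · simp
      · exact absurd rfl h1
      · exact absurd rfl h1
    · intro c _ hc; rw [hzx, if_neg (Ne.symm hc)]; simp
    · simp
  rw [hcoe, rtt_iff_series zs hz0]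
  rw [hxe, rtt_iff_series xs (by simpa [hxs] using hx0)] at hx
  rw [hye, rtt_iff_series ys (by simpa [hys] using hy0)] at hy
  have hCX : ∀ s : B⟦X⟧⟦X⟧, Commute (C (X : B⟦X⟧)) s := by
    intro s
    ext n m
    rw [coeff_C_mul, coeff_mul_C, (commute_X _).eq]
  have hX : ∀ s : B⟦X⟧⟦X⟧, Commute X s := fun s => (commute_X s).symm
  have c12 : ∀ f g : B⟦X⟧, (∀ m n, Commute (coeff m f) (coeff n g)) →
      Commute (C f) (map (C (R := B)) g) := by
    intro f g h
    ext n m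
    rw [coeff_coeff_mul, coeff_coeff_mul', (h m n).eq]
  refine rtt_mul (k := fun a b => C (C (k a b))) (x1 := fun a b => C (xs a b))
    (x2 := fun a b => map (C (R := B)) (xs a b)) (y1 := fun a b => C (ys a b))
    (y2 := fun a b => map (C (R := B)) (ys a b)) (z1 := fun a b => C (zs a b))
    (z2 := fun a b => map (C (R := B)) (zs a b))
    (fun s => (hX s).sub_left (hCX s)) (fun s => (hX s).mul_left (hCX s)) hx hy
    ?_ ?_ ?_ ?_ ?_ ?_ ?_ ?_ ?_ ?_
  · intro c b a d
    ext n m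
    simp only [← map_mul, coeff_csmul, coeff_C]
    split_ifs
    · simp [hxs, hk]
    · simp
  · intro c b a d
    ext n m
    simp [hxs, hk, coeff_C_mul, coeff_mul_C, ← map_mul, coeff_C]
  · intro c1 b1 c2 b2
    simp only [← map_mul, hkk c1]
  · intro c1 b1 c2 b2
    simp only [← map_mul, hkk' c1]
  · intro a b c d
    exact c12 _ _ fun m n => by simpa [hxs, hys] using hyx a b c d m n
  · intro a b c d
    exact (c12 _ _ fun m n => by simpa [hxs, hys] using (hyx a b c d n m).symm).symm
  · intro a b c d
    have : Commute (ys a b) (C (k c d)) := by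
      ext n
      simp [hys, (hky a b c d n).eq]
    exact this.map C
  · intro a b c d
    rw [← map_C]
    have : Commute (ys a b) (C (k c d)) := by
      ext n
      simp [hys, (hky a b c d n).eq]
    exact this.map (map (C (R := B)))
  · intro a b
    simp only [hzs, map_sum, map_mul]
  · intro a b
    simp only [hzs, map_sum, map_mul, map_C]


lemma RTT.map {B B' : Type*} [Ring B] [Algebra ℂ B] [Ring B'] [Algebra ℂ B'] (f : B →ₐ[ℂ] B')
    {x : Fin (M + N) → Fin (M + N) → ℕ → B} (hx : RTT x) : RTT (fun a b n => f (x a b n)) := by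
  intro a1 b1 a2 b2 m n
  have := congrArg f (hx a1 b1 a2 b2 m n)
  simpa [qb, xb, map_sub, map_smul, map_mul] using this

/-- Basis of the space of the one-site representation: the defining representation of `gl(M|N)`
(left summand) plus a trivial representation with the same graded dimension (right summand). -/
abbrev WI (M N : ℕ) := Fin (M + N) ⊕ Fin (M + N)

/-- Matrices acting on the one-site representation. -/
abbrev Mat (M N : ℕ) := Matrix (WI M N) (WI M N) ℂ

/-- The parity of a basis vector. -/
def pw (M N : ℕ) : WI M N → ℕ := Sum.elim (pa M) (pa M)

/-- The `p`-th power of the grading operator. -/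
noncomputable def kd (M N p : ℕ) : Mat M N := Matrix.diagonal fun i => (-1 : ℂ) ^ (p * pw M N i)

/-- The matrix unit `E^a_b` acting on the left summand. -/
noncomputable def Em (a b : Fin (M + N)) : Mat M N := Matrix.single (Sum.inl a) (Sum.inl b) 1

lemma kd_zero : kd M N 0 = 1 := by simp [kd]

lemma kd_mul (p q : ℕ) : kd M N p * kd M N q = kd M N (p + q) := by
  simp [kd, Matrix.diagonal_mul_diagonal, ← pow_add, add_mul]

lemma kd_mul_Em (p : ℕ) (a b : Fin (M + N)) :
    kd M N p * Em a b = (-1 : ℂ) ^ (p * pa M a) • Em a b := by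
  ext i j
  simp only [kd, Em, Matrix.diagonal_mul, Matrix.smul_apply, Matrix.single_apply, smul_eq_mul]
  split_ifs with h
  · rw [← h.1]; simp [pw]
  · simp

lemma Em_mul_kd (p : ℕ) (a b : Fin (M + N)) :
    Em a b * kd M N p = (-1 : ℂ) ^ (p * pa M b) • Em a b := by
  ext i j
  simp only [kd, Em, Matrix.mul_diagonal, Matrix.smul_apply, Matrix.single_apply, smul_eq_mul]
  split_ifs with h
  · rw [← h.2]; simp [pw]
  · simp

lemma Em_mul (a b c d : Fin (M + N)) :
    Em a b * Em c d = if b = c then Em a d else (0 : Mat M N) := by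
  unfold Em
  split_ifs with h
  · subst h; simp
  · exact Matrix.single_mul_single_of_ne _ _ _ _ (fun h' => h (Sum.inl_injective h')) _

lemma kd_parity (p : ℕ) : kd M N (p + 2) = kd M N p := by
  unfold kd
  congr 1
  funext i
  rw [add_mul, pow_add, pow_mul (-1 : ℂ) 2]
  norm_num

/-- The supercommutation of the grading operator with matrix units. -/
lemma kd_comm_Em (c b a d : Fin (M + N)) : kd M N (pa M c + pa M b) * Em a d =
    sgn1 M c b a d • (Em a d * kd M N (pa M c + pa M b)) := by
  rw [kd_mul_Em, Em_mul_kd, smul_smul]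
  congr 1
  rcases pa_eq M a with h1 | h1 <;> rcases pa_eq M b with h2 | h2 <;>
    rcases pa_eq M c with h3 | h3 <;> rcases pa_eq M d with h4 | h4 <;>
    norm_num [sgn1, h1, h2, h3, h4]

/-- The one-site evaluation representation `δ^a_c + (-1)^{[c]} E^a_c / (u - z)`, expanded in
`u⁻¹`; the polynomial variable is the evaluation point `z`. It satisfies the RTT relation but not
`Unit0`; the missing sign `(-1)^{[a]}` in `x[0]` is supplied by the other tensor factor. -/
noncomputable def xe (M N : ℕ) (a c : Fin (M + N)) : ℕ → Polynomial (Mat M N)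
  | 0 => if a = c then 1 else 0
  | r + 1 => Polynomial.monomial r (eps M c • Em a c)

lemma eps_mul_self {k : ℕ} (a : Fin k) : eps M a * eps M a = 1 := by
  rcases pa_eq M a with h | h <;> norm_num [eps, h]

lemma Em_super (a1 b1 a2 b2 : Fin (M + N)) :
    (eps M b1 • Em a1 b1) * (eps M b2 • Em a2 b2) - sgn1 M a1 b1 a2 b2 •
      ((eps M b2 • Em a2 b2) * (eps M b1 • Em a1 b1)) =
    sgn2 M a1 b1 a2 • ((if a2 = b1 then eps M b2 • Em a1 b2 else 0)
      - (if a1 = b2 then eps M b1 • Em a2 b1 else (0 : Mat M N))) := by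
  simp only [smul_mul_assoc, mul_smul_comm, Em_mul, smul_sub, smul_smul]
  congr 1
  · by_cases h : b1 = a2
    · subst h
      have := sgn2_fst (M := M) a1 b1
      have h2 := eps_mul_self (M := M) b1
      simp only [if_true, smul_smul]
      congr 1
      linear_combination (-eps M b2 * eps M b1) * this + sgn2 M a1 b1 b1 * eps M b2 * h2
    · simp [h, Ne.symm h]
  · by_cases h : b2 = a1
    · subst h
      have := sgn2_snd (M := M) b2 b1 a2
      have h2 := eps_mul_self (M := M) b2
      simp only [if_true, smul_smul]
      congr 1
      linear_combination (-eps M b1 * eps M b2) * this + sgn2 M b2 b1 a2 * eps M b1 * h2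
    · simp [h, Ne.symm h]

open Polynomial in
lemma xe_RTT : RTT (xe M N) := by
  have h0 : ∀ a b, xe M N a b 0 = if a = b then (1 : ℂ) • (1 : Polynomial (Mat M N)) else 0 := by
    intro a b; simp [xe]
  intro a1 b1 a2 b2 m n
  rcases m with _ | m <;> rcases n with _ | n
  · rw [qb_zero_left (h0 _ _), qb_zero_right (h0 _ _)]
    simp [xb]
  · rw [qb_zero_left (h0 _ _), sub_zero]
    have := congrArg (monomial n) (Em_super a1 b1 a2 b2)
    rw [smul_sub, map_sub, map_sub, ← smul_monomial, ← smul_monomial, ← smul_monomial] at this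
    simp only [qb, xb, xe, monomial_mul_monomial, zero_add, add_zero, smul_sub]
    rw [this]
    congr 1
    · congr 1; split_ifs <;> simp
    · congr 1; split_ifs <;> simp
  · rw [qb_zero_right (h0 _ _), zero_sub]
    have := congrArg (monomial m) (Em_super a1 b1 a2 b2)
    rw [smul_sub, map_sub, map_sub, ← smul_monomial, ← smul_monomial, ← smul_monomial] at this
    simp only [qb, xb, xe, monomial_mul_monomial, zero_add, add_zero, smul_sub]
    rw [this, neg_sub]
    congr 1
    · congr 1; split_ifs <;> simp
    · congr 1; split_ifs <;> simp
  · simp only [qb, xb, xe, monomial_mul_monomial]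
    have e1 : m + 1 + n = m + (n + 1) := by omega
    have e2 : n + (m + 1) = n + 1 + m := by omega
    rw [e1, e2, add_comm n m]
    simp

/-- The grading factor between the two legs of the coproduct. -/
noncomputable def kc (c b : Fin (M + N)) : Polynomial (Mat M N) :=
  Polynomial.monomial 0 (kd M N (pa M c + pa M b))

open Polynomial in
lemma kc_xe (c b a d : Fin (M + N)) (n : ℕ) :
    kc c b * xe M N a d n = sgn1 M c b a d • (xe M N a d n * kc c b) := by
  rcases n with _ | n
  · unfold xe
    split_ifs with h
    · subst h; simp [sgn1_diag_right]
    · simp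
  · simp only [kc, xe, monomial_mul_monomial, zero_add, add_zero, mul_smul_comm, smul_mul_assoc,
      kd_comm_Em, smul_monomial, smul_smul, mul_comm]

open TensorProduct Polynomial in
/-- Tensoring with the one-site evaluation representation: a homomorphism from `A` to
`A ⊗ Mat[z]`. -/
lemma exists_coproduct {A : Type} [Ring A] [Algebra ℂ A]
    {τ : Fin (M + N) → Fin (M + N) → ℕ → A} (hτ : IsYangian M N A τ) :
    ∃ Δ : A →ₐ[ℂ] A ⊗[ℂ] Polynomial (Mat M N), ∀ a b n, Δ (τ a b n) =
      ∑ c, ∑ p ∈ Finset.HasAntidiagonal.antidiagonal n,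
        τ c b p.2 ⊗ₜ[ℂ] (xe M N a c p.1 * kc c b) := by
  have h := RTT.mul (B := A ⊗[ℂ] Polynomial (Mat M N))
    (k := fun c b => Algebra.TensorProduct.includeRight (R := ℂ) (A := A) (kc c b))
    ((xe_RTT (M := M) (N := N)).map (Algebra.TensorProduct.includeRight (R := ℂ) (A := A)))
    (hτ.rtt.map (Algebra.TensorProduct.includeLeft (S := ℂ) (B := Polynomial (Mat M N))))
    ?_ ?_ ?_ ?_ ?_ ?_ ?_ ?_
  · have hx : ∀ a b n, (∑ c, ∑ p ∈ Finset.HasAntidiagonal.antidiagonal n,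
        Algebra.TensorProduct.includeRight (R := ℂ) (A := A) (xe M N a c p.1) *
        Algebra.TensorProduct.includeRight (R := ℂ) (A := A) (kc c b) *
        Algebra.TensorProduct.includeLeft (S := ℂ) (R := ℂ) (B := Polynomial (Mat M N))
          (τ c b p.2)) = ∑ c, ∑ p ∈ Finset.HasAntidiagonal.antidiagonal n,
        τ c b p.2 ⊗ₜ[ℂ] (xe M N a c p.1 * kc c b) := by
      intro a b n
      refine Finset.sum_congr rfl fun c _ => Finset.sum_congr rfl fun p _ => ?_
      simp
    simp only [hx] at h
    refine hτ.lift _ _ h ?_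
    intro a b
    simp only [Finset.HasAntidiagonal.antidiagonal_zero, Finset.sum_singleton]
    rw [Finset.sum_eq_single a]
    · rw [hτ.unit0]
      split_ifs with hab
      · subst hab
        have : kc a a = (1 : Polynomial (Mat M N)) := by
          rcases pa_eq M a with h | h
          · simp [kc, h, kd_zero]
          · simp [kc, h, kd_parity 0, kd_zero]
        simp [xe, this, TensorProduct.smul_tmul', Algebra.TensorProduct.one_def]
      · simp
    · intro c _ hc
      simp [xe, Ne.symm hc]
    · simp
  · intro a b
    refine ⟨1, ?_⟩
    simp only [xe]
    split_ifs <;> simp [Algebra.TensorProduct.one_def]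
  · intro a b
    refine ⟨eps M a, ?_⟩
    rw [hτ.unit0]
    split_ifs
    · rw [map_smul, map_one]
    · rw [map_zero]
  · intro a
    have : kc a a = (1 : Polynomial (Mat M N)) := by
      rcases pa_eq M a with h | h
      · simp [kc, h, kd_zero]
      · simp [kc, h, kd_parity 0, kd_zero]
    simp [this, Algebra.TensorProduct.one_def]
  · intro c b a d n
    rw [← map_mul, ← map_mul, ← map_smul, kc_xe]
  · intro c1 b1 c2 b2
    simp only [← map_mul, kc, monomial_mul_monomial, kd_mul, add_comm]
  · intro c1 b1 c2 b2
    simp only [← map_mul, kc, monomial_mul_monomial, kd_mul]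
    have e : pa M c1 + pa M b1 + (pa M c2 + pa M b2) = pa M c2 + pa M b1 + (pa M c1 + pa M b2) := by
      ring
    rw [e]
  · intro a b c d m n
    simp [Commute, SemiconjBy]
  · intro a b c d n
    simp [Commute, SemiconjBy]

end Coproduct

/-! ### The leading part of the coproduct of a word -/

section Leading

open TensorProduct Polynomial

variable {M N : ℕ} {A : Type} [Ring A] [Algebra ℂ A]

/-- The parity (up to even numbers) of a generator. -/
def gp (g : Gen M N) : ℕ := pa M g.1 + pa M g.2.1

/-- The monomial attached to a word in the generators. -/
def wd (τ : Fin (M + N) → Fin (M + N) → ℕ → A) (w : List (Gen M N)) : A :=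
  (w.map fun g => τ g.1 g.2.1 (g.2.2 + 1)).prod

/-- The degree of a word, where `t^a_b[n]` has degree `n - 1`. -/
def dg (w : List (Gen M N)) : ℕ := (w.map fun g => g.2.2).sum

/-- The total parity (up to even numbers) of a word. -/
def gpw (w : List (Gen M N)) : ℕ := (w.map gp).sum

@[simp] lemma wd_nil {A : Type} [Ring A] (τ : Fin (M + N) → Fin (M + N) → ℕ → A) :
    wd τ [] = 1 := rfl
@[simp] lemma wd_cons {A : Type} [Ring A] (τ : Fin (M + N) → Fin (M + N) → ℕ → A)
    (g : Gen M N) (w : List (Gen M N)) :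
    wd τ (g :: w) = τ g.1 g.2.1 (g.2.2 + 1) * wd τ w := by simp [wd]
@[simp] lemma wd_append {A : Type} [Ring A] (τ : Fin (M + N) → Fin (M + N) → ℕ → A)
    (v w : List (Gen M N)) :
    wd τ (v ++ w) = wd τ v * wd τ w := by simp [wd]
@[simp] lemma dg_nil : dg ([] : List (Gen M N)) = 0 := rfl
@[simp] lemma dg_cons (g : Gen M N) (w : List (Gen M N)) : dg (g :: w) = g.2.2 + dg w := by
  simp [dg]
@[simp] lemma dg_append (v w : List (Gen M N)) : dg (v ++ w) = dg v + dg w := by simp [dg]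
@[simp] lemma gpw_nil : gpw ([] : List (Gen M N)) = 0 := rfl
@[simp] lemma gpw_cons (g : Gen M N) (w : List (Gen M N)) : gpw (g :: w) = gp g + gpw w := by
  simp [gpw]
@[simp] lemma gpw_append (v w : List (Gen M N)) : gpw (v ++ w) = gpw v + gpw w := by simp [gpw]

variable (τ : Fin (M + N) → Fin (M + N) → ℕ → A)

/-- The span of the tensors `v ⊗ z^e m` with total degree less than `D`, or equal to `D` with
the word `v` shorter than `L - 1`. These are negligible in the coproduct of a word of
degree `D` and length `L`. -/
noncomputable def Us (D L : ℕ) : Submodule ℂ (A ⊗[ℂ] Polynomial (Mat M N)) :=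
  Submodule.span ℂ {z | ∃ (v : List (Gen M N)) (e : ℕ) (m : Mat M N),
    (dg v + e < D ∨ dg v + e = D ∧ v.length + 1 < L) ∧ z = wd τ v ⊗ₜ[ℂ] monomial e m}

lemma mem_Us {D L : ℕ} (v : List (Gen M N)) (e : ℕ) (m : Mat M N)
    (h : dg v + e < D ∨ dg v + e = D ∧ v.length + 1 < L) :
    wd τ v ⊗ₜ[ℂ] monomial e m ∈ Us τ D L :=
  Submodule.subset_span ⟨v, e, m, h, rfl⟩

lemma Us_mono {D L D' L' : ℕ} (h : D < D' ∨ D = D' ∧ L ≤ L') :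
    Us (M := M) (N := N) τ D L ≤ Us τ D' L' := by
  refine Submodule.span_le.2 ?_
  rintro _ ⟨v, e, m, hv, rfl⟩
  exact mem_Us τ v e m (by omega)

lemma mul_Us {D L : ℕ} (v : List (Gen M N)) (e : ℕ) (m : Mat M N)
    {u : A ⊗[ℂ] Polynomial (Mat M N)} (hu : u ∈ Us τ D L) :
    (wd τ v ⊗ₜ[ℂ] monomial e m) * u ∈ Us τ (dg v + e + D) (v.length + L) := by
  induction hu using Submodule.span_induction with
  | mem x hx =>
    obtain ⟨v', e', m', hv, rfl⟩ := hx
    rw [Algebra.TensorProduct.tmul_mul_tmul, monomial_mul_monomial, ← wd_append]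
    refine mem_Us τ _ _ _ ?_
    simp only [dg_append, List.length_append]
    omega
  | zero => simp
  | add x y _ _ hx hy => rw [mul_add]; exact add_mem hx hy
  | smul c x _ hx => rw [mul_smul_comm]; exact Submodule.smul_mem _ _ hx

lemma Us_zero_mul {d D L L' : ℕ} {r u : A ⊗[ℂ] Polynomial (Mat M N)} (hr : r ∈ Us τ d 0)
    (hu : u ∈ Us τ D L) : r * u ∈ Us τ (d + D) L' := by
  induction hr using Submodule.span_induction with
  | mem x hx =>
    obtain ⟨v', e', m', hv, rfl⟩ := hx
    exact Us_mono τ (by omega) (mul_Us τ v' e' m' hu)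
  | zero => simp
  | add x y _ _ hx hy => rw [add_mul]; exact add_mem hx hy
  | smul c x _ hx => rw [smul_mul_assoc]; exact Submodule.smul_mem _ _ hx

/-- The part of the coproduct of a word in which exactly one letter acts on the matrix leg, and
does so by its leading term. -/
noncomputable def Dv : List (Gen M N) → A ⊗[ℂ] Polynomial (Mat M N)
  | [] => 0
  | h :: w => wd τ w ⊗ₜ[ℂ] monomial h.2.2 (Em h.1 h.2.1 * kd M N (gpw w)) +
      (wd τ [h] ⊗ₜ[ℂ] monomial 0 (kd M N (gp h))) * Dv w

lemma Dv_mem (w : List (Gen M N)) : Dv τ w ∈ Us τ (dg w) (w.length + 1) := by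
  induction w with
  | nil => exact zero_mem _
  | cons h w ih =>
    refine add_mem (mem_Us τ _ _ _ ?_) ?_
    · simp only [dg_cons, List.length_cons]; omega
    · refine Us_mono τ ?_ (mul_Us τ [h] 0 _ ih)
      simp only [dg_cons, dg_nil, List.length_cons, List.length_nil]; omega

variable {τ}

/-- The coproduct of a generator: two leading terms, and terms of lower degree. -/
lemma coproduct_gen (h0 : Unit0 τ) {Δ : A →ₐ[ℂ] A ⊗[ℂ] Polynomial (Mat M N)}
    (hΔ : ∀ a b n, Δ (τ a b n) = ∑ c, ∑ p ∈ Finset.HasAntidiagonal.antidiagonal n,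
        τ c b p.2 ⊗ₜ[ℂ] (xe M N a c p.1 * kc c b)) (h : Gen M N) :
    ∃ r ∈ Us τ h.2.2 0, Δ (τ h.1 h.2.1 (h.2.2 + 1)) =
      wd τ [h] ⊗ₜ[ℂ] monomial 0 (kd M N (gp h)) +
        wd τ [] ⊗ₜ[ℂ] monomial h.2.2 (Em h.1 h.2.1) + r := by
  obtain ⟨a, b, d⟩ := h
  refine ⟨∑ c, ∑ p ∈ (Finset.HasAntidiagonal.antidiagonal d).erase (d, 0),
    τ c b p.2 ⊗ₜ[ℂ] (xe M N a c (p.1 + 1) * kc c b), ?_, ?_⟩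
  · refine Submodule.sum_mem _ fun c _ => Submodule.sum_mem _ fun p hp => ?_
    obtain ⟨i, j⟩ := p
    rw [Finset.mem_erase, Finset.HasAntidiagonal.mem_antidiagonal] at hp
    obtain ⟨hp1, hp2⟩ := hp
    simp only [ne_eq, Prod.mk.injEq] at hp1 hp2
    obtain ⟨j, rfl⟩ : ∃ j', j = j' + 1 := ⟨j - 1, by omega⟩
    have e : τ c b (j + 1) = wd τ [(c, b, j)] := by simp
    simp only [xe, kc, monomial_mul_monomial, e]
    refine mem_Us τ _ _ _ ?_
    simp only [dg_cons, dg_nil]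
    omega
  · have hd : (d, 0) ∈ Finset.HasAntidiagonal.antidiagonal d := by simp
    simp only [hΔ, Finset.Nat.sum_antidiagonal_succ]
    rw [Finset.sum_add_distrib]
    simp only [← Finset.add_sum_erase _ _ hd]
    rw [Finset.sum_add_distrib, ← add_assoc]
    congr 2
    · rw [Finset.sum_eq_single a]
      · simp [xe, kc, gp]
      · intro c _ hc; simp [xe, Ne.symm hc]
      · simp
    · rw [Finset.sum_eq_single b]
      · rw [h0, if_pos rfl]
        simp only [xe, kc, monomial_mul_monomial, add_zero, wd_nil]
        have : (eps M b • Em a b) * kd M N (pa M b + pa M b) = eps M b • Em a b := by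
          rw [smul_mul_assoc, Em_mul_kd]
          rcases pa_eq M b with h | h <;> simp [h]
        rw [this, TensorProduct.smul_tmul, smul_monomial, smul_smul, eps_mul_self, one_smul]
      · intro c _ hc; rw [h0, if_neg hc]; simp
      · simp

/-- The leading part of the coproduct of a word. -/
lemma coproduct_word (h0 : Unit0 τ) {Δ : A →ₐ[ℂ] A ⊗[ℂ] Polynomial (Mat M N)}
    (hΔ : ∀ a b n, Δ (τ a b n) = ∑ c, ∑ p ∈ Finset.HasAntidiagonal.antidiagonal n,
        τ c b p.2 ⊗ₜ[ℂ] (xe M N a c p.1 * kc c b)) (w : List (Gen M N)) :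
    ∃ r ∈ Us τ (dg w) w.length, Δ (wd τ w) =
      wd τ w ⊗ₜ[ℂ] monomial 0 (kd M N (gpw w)) + Dv τ w + r := by
  induction w with
  | nil => exact ⟨0, zero_mem _, by simp [Dv, kd_zero, Algebra.TensorProduct.one_def]⟩
  | cons h w ih =>
    obtain ⟨r, hr, er⟩ := ih
    obtain ⟨s, hs, es⟩ := coproduct_gen h0 hΔ h
    set P := wd τ [h] ⊗ₜ[ℂ] monomial 0 (kd M N (gp h)) with hP
    set Q := wd τ [] ⊗ₜ[ℂ] monomial h.2.2 (Em h.1 h.2.1) with hQ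
    set W := wd τ w ⊗ₜ[ℂ] monomial 0 (kd M N (gpw w)) with hW
    refine ⟨P * r + Q * Dv τ w + Q * r + s * (W + Dv τ w + r), ?_, ?_⟩
    · have hWm : W ∈ Us τ (dg w) (w.length + 2) := mem_Us τ _ _ _ (by omega)
      have hall : W + Dv τ w + r ∈ Us τ (dg w) (w.length + 2) :=
        add_mem (add_mem hWm (Us_mono τ (by omega) (Dv_mem τ w))) (Us_mono τ (by omega) hr)
      refine add_mem (add_mem (add_mem ?_ ?_) ?_) ?_
      · refine Us_mono τ ?_ (mul_Us τ [h] 0 _ hr)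
        simp only [dg_cons, dg_nil, List.length_cons, List.length_nil]; omega
      · refine Us_mono τ ?_ (mul_Us τ [] h.2.2 _ (Dv_mem τ w))
        simp only [dg_cons, dg_nil, List.length_cons, List.length_nil]; omega
      · refine Us_mono τ ?_ (mul_Us τ [] h.2.2 _ hr)
        simp only [dg_cons, dg_nil, List.length_cons, List.length_nil]; omega
      · rw [dg_cons]
        exact Us_zero_mul τ hs hall
    · have e1 : P * W = wd τ (h :: w) ⊗ₜ[ℂ] monomial 0 (kd M N (gpw (h :: w))) := by
        rw [hP, hW, Algebra.TensorProduct.tmul_mul_tmul, monomial_mul_monomial, kd_mul, gpw_cons,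
          ← wd_append]
        rfl
      have e2 : Q * W = wd τ w ⊗ₜ[ℂ] monomial h.2.2 (Em h.1 h.2.1 * kd M N (gpw w)) := by
        rw [hQ, hW, Algebra.TensorProduct.tmul_mul_tmul, monomial_mul_monomial, add_zero,
          ← wd_append]
        rfl
      rw [← e1, Dv, ← e2, ← hP, wd_cons, map_mul, es, er]
      noncomm_ring

end Leading

/-! ### Linear independence of the normal words -/

section Independence

open TensorProduct Polynomial

variable {M N : ℕ} {A : Type} [Ring A] [Algebra ℂ A]
  {τ : Fin (M + N) → Fin (M + N) → ℕ → A}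

/-- The functional on the matrix leg which detects the generator `g = (a, b, d)`: the coefficient
of `z^d E^a_b` on the defining representation, corrected by the trivial summand so that it
vanishes on the powers of the grading operator. -/
noncomputable def fg (g : Gen M N) : Polynomial (Mat M N) →ₗ[ℂ] ℂ where
  toFun m := m.coeff g.2.2 (Sum.inl g.1) (Sum.inl g.2.1) -
    m.coeff g.2.2 (Sum.inr g.1) (Sum.inr g.2.1)
  map_add' x y := by simp only [coeff_add, Matrix.add_apply]; ring
  map_smul' c x := by simp [mul_sub]

lemma fg_kd (g : Gen M N) (e p : ℕ) : fg g (monomial e (kd M N p)) = 0 := by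
  simp only [fg, LinearMap.coe_mk, AddHom.coe_mk, coeff_monomial]
  split_ifs with h
  · simp [kd, Matrix.diagonal_apply, pw]
  · simp

lemma fg_monomial_ne (g : Gen M N) {e : ℕ} (m : Mat M N) (h : e ≠ g.2.2) :
    fg g (monomial e m) = 0 := by
  simp [fg, coeff_monomial, h]

lemma fg_Em (g h : Gen M N) (p q : ℕ) :
    fg g (monomial h.2.2 (kd M N p * Em h.1 h.2.1 * kd M N q)) =
      if h = g then (-1 : ℂ) ^ (p * pa M h.1 + q * pa M h.2.1) else 0 := by
  rw [kd_mul_Em, smul_mul_assoc, Em_mul_kd, smul_smul, ← pow_add]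
  obtain ⟨a, b, d⟩ := g
  obtain ⟨a', b', d'⟩ := h
  by_cases hd : d' = d
  · subst hd
    simp [fg, Em, Matrix.single_apply]
  · rw [fg_monomial_ne _ _ hd, if_neg]
    simp [hd]

/-- The functional `φ ⊗ f` on a tensor product. -/
noncomputable def pr (φ : A →ₗ[ℂ] ℂ) (f : Polynomial (Mat M N) →ₗ[ℂ] ℂ) :
    A ⊗[ℂ] Polynomial (Mat M N) →ₗ[ℂ] ℂ :=
  LinearMap.mul' ℂ ℂ ∘ₗ TensorProduct.map φ f

lemma pr_tmul (φ : A →ₗ[ℂ] ℂ) (f : Polynomial (Mat M N) →ₗ[ℂ] ℂ) (a : A)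
    (m : Polynomial (Mat M N)) : pr φ f (a ⊗ₜ[ℂ] m) = φ a * f m := by
  simp [pr]

/-- The functional on `A` attached to a word `g₁ g₂ … g_L`: the iterated coproduct, followed by
the functional detecting `g_i` on the `i`-th matrix leg, and by `ε` on what remains. -/
noncomputable def ell (Δ : A →ₐ[ℂ] A ⊗[ℂ] Polynomial (Mat M N)) (ε : A →ₗ[ℂ] ℂ) :
    List (Gen M N) → (A →ₗ[ℂ] ℂ)
  | [] => ε
  | g :: gs => pr (ell Δ ε gs) (fg g) ∘ₗ Δ.toLinearMap

/-- The hypothesis that `Δ` is the coproduct of `exists_coproduct`. -/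
def IsCop (τ : Fin (M + N) → Fin (M + N) → ℕ → A)
    (Δ : A →ₐ[ℂ] A ⊗[ℂ] Polynomial (Mat M N)) : Prop :=
  ∀ a b n, Δ (τ a b n) = ∑ c, ∑ p ∈ Finset.HasAntidiagonal.antidiagonal n,
    τ c b p.2 ⊗ₜ[ℂ] (xe M N a c p.1 * kc c b)

lemma pr_Us (φ : A →ₗ[ℂ] ℂ) (g : Gen M N) (gs : List (Gen M N))
    (hφ : ∀ v : List (Gen M N), (dg v < dg gs ∨ dg v = dg gs ∧ v.length < gs.length) →
      φ (wd τ v) = 0)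
    {D L : ℕ} (hD : D < dg (g :: gs) ∨ D = dg (g :: gs) ∧ L ≤ gs.length + 1)
    {u : A ⊗[ℂ] Polynomial (Mat M N)} (hu : u ∈ Us τ D L) : pr φ (fg g) u = 0 := by
  induction hu using Submodule.span_induction with
  | mem x hx =>
    obtain ⟨v, e, m, hv, rfl⟩ := hx
    rw [pr_tmul]
    rw [dg_cons] at hD
    by_cases he : e = g.2.2
    · rw [hφ v (by omega), zero_mul]
    · rw [fg_monomial_ne _ _ he, mul_zero]
  | zero => simp
  | add x y _ _ hx hy => rw [map_add, hx, hy, add_zero]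
  | smul c x _ hx => rw [map_smul, hx, smul_zero]

/-- The functional of a word vanishes on the words which are smaller in degree and length. -/
lemma ell_kill (h0 : Unit0 τ) {Δ : A →ₐ[ℂ] A ⊗[ℂ] Polynomial (Mat M N)} (hΔ : IsCop τ Δ)
    (ε : A →ₗ[ℂ] ℂ) (gs v : List (Gen M N))
    (h : dg v < dg gs ∨ dg v = dg gs ∧ v.length < gs.length) : ell Δ ε gs (wd τ v) = 0 := by
  induction gs generalizing v with
  | nil => simp at h
  | cons g gs ih =>
    obtain ⟨r, hr, e⟩ := coproduct_word h0 hΔ v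
    simp only [ell, LinearMap.comp_apply, AlgHom.toLinearMap_apply]
    rw [List.length_cons] at h
    rw [e, map_add, map_add, pr_tmul, fg_kd, mul_zero, zero_add,
      pr_Us _ g gs ih (by omega) (Dv_mem τ v), pr_Us _ g gs ih (by omega) hr, add_zero]

/-- On words of the same degree and length only the leading part of the coproduct matters. -/
lemma ell_val (h0 : Unit0 τ) {Δ : A →ₐ[ℂ] A ⊗[ℂ] Polynomial (Mat M N)} (hΔ : IsCop τ Δ)
    (ε : A →ₗ[ℂ] ℂ) (g : Gen M N) (gs w : List (Gen M N))
    (hd : dg w = dg (g :: gs)) (hl : w.length = gs.length + 1) :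
    ell Δ ε (g :: gs) (wd τ w) = pr (ell Δ ε gs) (fg g) (Dv τ w) := by
  obtain ⟨r, hr, e⟩ := coproduct_word h0 hΔ w
  simp only [ell, LinearMap.comp_apply, AlgHom.toLinearMap_apply]
  rw [e, map_add, map_add, pr_tmul, fg_kd, mul_zero, zero_add,
    pr_Us _ g gs (ell_kill h0 hΔ ε gs) (by omega) hr, add_zero]

lemma pr_Dv_cons (φ : A →ₗ[ℂ] ℂ) (g h : Gen M N) (v w : List (Gen M N)) :
    pr φ (fg g) ((wd τ v ⊗ₜ[ℂ] monomial 0 (kd M N (gpw v))) * Dv τ (h :: w)) =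
      φ (wd τ (v ++ w)) *
        (if h = g then (-1 : ℂ) ^ (gpw v * pa M h.1 + gpw w * pa M h.2.1) else 0) +
      pr φ (fg g) ((wd τ (v ++ [h]) ⊗ₜ[ℂ] monomial 0 (kd M N (gpw (v ++ [h])))) * Dv τ w) := by
  rw [Dv, mul_add, map_add, Algebra.TensorProduct.tmul_mul_tmul, monomial_mul_monomial, zero_add,
    ← mul_assoc, ← mul_assoc, Algebra.TensorProduct.tmul_mul_tmul, monomial_mul_monomial, kd_mul,
    pr_tmul, fg_Em, ← wd_append, ← wd_append, gpw_append, gpw_cons, gpw_nil]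
  rfl

/-- `φ ⊗ fg g` picks the terms in which the letter sent to the matrix leg is `g`. -/
lemma pr_Dv_ne_zero (φ : A →ₗ[ℂ] ℂ) (g : Gen M N) (v w : List (Gen M N))
    (h : pr φ (fg g) ((wd τ v ⊗ₜ[ℂ] monomial 0 (kd M N (gpw v))) * Dv τ w) ≠ 0) :
    ∃ w₁ w₂, w = w₁ ++ g :: w₂ ∧ φ (wd τ (v ++ (w₁ ++ w₂))) ≠ 0 := by
  induction w generalizing v with
  | nil => simp [Dv] at h
  | cons x w ih =>
    rw [pr_Dv_cons] at h
    by_cases hx : x = g ∧ φ (wd τ (v ++ w)) ≠ 0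
    · exact ⟨[], w, by rw [hx.1]; rfl, hx.2⟩
    · have : pr φ (fg g)
          ((wd τ (v ++ [x]) ⊗ₜ[ℂ] monomial 0 (kd M N (gpw (v ++ [x])))) * Dv τ w) ≠ 0 := by
        intro h'
        apply h
        rw [h', add_zero]
        by_cases hxg : x = g
        · have : φ (wd τ (v ++ w)) = 0 := by
            by_contra h2
            exact hx ⟨hxg, h2⟩
          rw [this, zero_mul]
        · rw [if_neg hxg, mul_zero]
      obtain ⟨w₁, w₂, rfl, h2⟩ := ih _ this
      exact ⟨x :: w₁, w₂, rfl, by simpa using h2⟩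

lemma one_mul_Dv (w : List (Gen M N)) :
    (wd τ [] ⊗ₜ[ℂ] monomial 0 (kd M N (gpw ([] : List (Gen M N))))) * Dv τ w = Dv τ w := by
  have : (wd τ [] ⊗ₜ[ℂ] monomial 0 (kd M N (gpw ([] : List (Gen M N))))) =
      (1 : A ⊗[ℂ] Polynomial (Mat M N)) := by
    simp [kd_zero, Algebra.TensorProduct.one_def]
  rw [this, one_mul]

lemma dg_perm {v w : List (Gen M N)} (h : v.Perm w) : dg v = dg w := (h.map _).sum_eq

/-- Among the words of the same degree and length, the functional of a word sees only its
rearrangements. -/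
lemma ell_perm (h0 : Unit0 τ) {Δ : A →ₐ[ℂ] A ⊗[ℂ] Polynomial (Mat M N)} (hΔ : IsCop τ Δ)
    (ε : A →ₗ[ℂ] ℂ) (gs w : List (Gen M N)) (hd : dg w = dg gs) (hl : w.length = gs.length)
    (h : ell Δ ε gs (wd τ w) ≠ 0) : w.Perm gs := by
  induction gs generalizing w with
  | nil => rw [List.length_eq_zero_iff.1 hl]
  | cons g gs ih =>
    rw [ell_val h0 hΔ ε g gs w hd hl, ← one_mul_Dv] at h
    obtain ⟨w₁, w₂, rfl, h2⟩ := pr_Dv_ne_zero _ _ _ _ h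
    have hp := List.perm_middle (a := g) (l₁ := w₁) (l₂ := w₂)
    have hd' := dg_perm hp
    have hl' := hp.length_eq
    rw [hd', dg_cons, dg_cons] at hd
    rw [hl', List.length_cons, List.length_cons] at hl
    exact hp.trans ((ih (w₁ ++ w₂) (by omega) (by omega) h2).cons g)

/-- The relation between an earlier and a later letter of a normal word: strictly increasing for
the order given by `ky`, except that even letters may be repeated. -/
def Rn (ky : Gen M N → ℕ) (x y : Gen M N) : Prop := ky x < ky y ∨ x = y ∧ Even (gp x)

/-- Copies of the first letter of a normal word come first, and an odd letter occurs only once. -/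
lemma normal_split {ky : Gen M N → ℕ} {g : Gen M N} {gs v w : List (Gen M N)}
    (hn : (g :: gs).Pairwise (Rn ky)) (h : v ++ g :: w = g :: gs) :
    v ++ w = gs ∧ (v = [] ∨ Even (gp g)) := by
  have hv : ∀ x ∈ v, x = g ∧ Even (gp g) := by
    intro x hx
    rw [← h] at hn
    have h1 : Rn ky x g := (List.pairwise_append.1 hn).2.2 x hx g (by simp)
    rw [h] at hn
    have h2 : x = g ∨ Rn ky g x := by
      have : x ∈ g :: gs := by rw [← h]; simp [hx]
      rcases List.mem_cons.1 this with h3 | h3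
      · exact Or.inl h3
      · exact Or.inr ((List.pairwise_cons.1 hn).1 x h3)
    rcases h1 with h1 | ⟨h1, h1'⟩
    · rcases h2 with h2 | h2 | ⟨h2, _⟩
      · subst h2; omega
      · omega
      · subst h2; omega
    · subst h1; exact ⟨rfl, h1'⟩
  have hr : v = List.replicate v.length g :=
    List.eq_replicate_iff.2 ⟨rfl, fun x hx => (hv x hx).1⟩
  constructor
  · have : v ++ g :: w = g :: (v ++ w) := by
      rw [hr]
      have := List.replicate_succ' (n := v.length) (a := g)
      rw [List.replicate_succ] at this
      rw [← List.cons_append, this, List.append_assoc]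
      rfl
    rw [this] at h
    exact (List.cons.inj h).2
  · rcases v with _ | ⟨x, v⟩
    · exact Or.inl rfl
    · exact Or.inr (hv x (by simp)).2

/-- Each occurrence of the first letter `g` of a normal word contributes the same value to
`φ ⊗ fg g`; the contributions do not cancel, since `g` is repeated only when it is even. -/
lemma pr_Dv_normal {ky : Gen M N → ℕ} (φ : A →ₗ[ℂ] ℂ) {g : Gen M N} {gs : List (Gen M N)}
    (hn : (g :: gs).Pairwise (Rn ky)) (v w : List (Gen M N)) (h : v ++ w = g :: gs) :
    pr φ (fg g) ((wd τ v ⊗ₜ[ℂ] monomial 0 (kd M N (gpw v))) * Dv τ w) =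
      (w.count g : ℂ) * (-1 : ℂ) ^ (gpw gs * pa M g.2.1) * φ (wd τ gs) := by
  induction w generalizing v with
  | nil => simp [Dv]
  | cons x w ih =>
    rw [pr_Dv_cons, ih (v ++ [x]) (by simpa using h), List.count_cons]
    by_cases hx : x = g
    · subst hx
      obtain ⟨h1, h2⟩ := normal_split hn h
      have hs : (-1 : ℂ) ^ (gpw v * pa M x.1 + gpw w * pa M x.2.1) =
          (-1 : ℂ) ^ (gpw gs * pa M x.2.1) := by
        rw [← h1, gpw_append, add_mul]
        rcases h2 with rfl | h2
        · simp
        · have : pa M x.1 = pa M x.2.1 := by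
            unfold gp at h2
            rcases pa_eq M x.1 with h3 | h3 <;> rcases pa_eq M x.2.1 with h4 | h4 <;>
              rw [h3, h4] at h2 ⊢ <;> exact absurd h2 (by decide)
          rw [this]
      rw [if_pos rfl, hs, h1]
      simp
      ring
    · simp [hx]

lemma ell_normal (h0 : Unit0 τ) {Δ : A →ₐ[ℂ] A ⊗[ℂ] Polynomial (Mat M N)} (hΔ : IsCop τ Δ)
    {ε : A →ₗ[ℂ] ℂ} (hε : ε 1 ≠ 0) {ky : Gen M N → ℕ} (gs : List (Gen M N))
    (hn : gs.Pairwise (Rn ky)) : ell Δ ε gs (wd τ gs) ≠ 0 := by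
  induction gs with
  | nil => exact hε
  | cons g gs ih =>
    rw [ell_val h0 hΔ ε g gs _ rfl rfl, ← one_mul_Dv, pr_Dv_normal _ hn [] _ rfl]
    refine mul_ne_zero (mul_ne_zero ?_ (by simp)) (ih (List.pairwise_cons.1 hn).2)
    rw [List.count_cons_self]
    exact Nat.cast_ne_zero.2 (Nat.succ_ne_zero _)

lemma normal_unique {ky : Gen M N → ℕ} {v w : List (Gen M N)} (hv : v.Pairwise (Rn ky))
    (hw : w.Pairwise (Rn ky)) (h : v.Perm w) : v = w := by
  refine h.eq_of_pairwise (fun a b _ _ h1 h2 => ?_) hv hw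
  rcases h1 with h1 | ⟨h1, _⟩
  · rcases h2 with h2 | ⟨h2, _⟩
    · omega
    · exact h2.symm
  · exact h1

lemma exists_counit (hτ : IsYangian M N A τ) : ∃ ε : A →ₗ[ℂ] ℂ, ε 1 ≠ 0 := by
  have h0 : Unit0 (M := M) (N := N) (B := ℂ)
      fun a b n => if n = 0 then (if a = b then eps M a • (1 : ℂ) else 0) else 0 := by
    intro a b; simp
  have hr : RTT (M := M) (N := N) (B := ℂ)
      fun a b n => if n = 0 then (if a = b then eps M a • (1 : ℂ) else 0) else 0 := by
    refine RTT.of_rel h0 fun a1 b1 a2 b2 m n hm hn => ?_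
    have e1 : m ≠ 0 := by omega
    have e2 : n ≠ 0 := by omega
    have e3 : m + n - 1 ≠ 0 := by omega
    simp only [qb, if_neg e1, if_neg e2, if_neg e3, mul_zero, smul_zero, sub_zero, ite_self]
    rw [Finset.sum_eq_zero, smul_zero, add_zero]
    intro r hr
    have hr0 : r ≠ 0 := by have := (Finset.mem_Ico.1 hr).1; omega
    simp [hr0]
  obtain ⟨f, -⟩ := hτ.lift ℂ _ hr h0
  exact ⟨f.toLinearMap, by simp⟩

/-- The normal words are linearly independent: the functional of a normal word of maximal
(degree, length) in a linear relation isolates its coefficient. -/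
lemma normal_linearIndependent (hτ : IsYangian M N A τ) (ky : Gen M N → ℕ) :
    LinearIndependent ℂ fun w : {w : List (Gen M N) // w.Pairwise (Rn ky)} => wd τ w.1 := by
  classical
  obtain ⟨Δ, hΔ⟩ := exists_coproduct hτ
  obtain ⟨ε, hε⟩ := exists_counit hτ
  have h0 := hτ.unit0
  rw [linearIndependent_iff']
  intro s c hc
  by_contra! hne
  obtain ⟨i, his, hi⟩ := hne
  obtain ⟨j, hj, hmax⟩ := (s.filter fun i => c i ≠ 0).exists_max_image
    (fun w => toLex (dg w.1, w.1.length)) ⟨i, Finset.mem_filter.2 ⟨his, hi⟩⟩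
  rw [Finset.mem_filter] at hj
  have h := congrArg (ell Δ ε j.1) hc
  rw [map_sum, map_zero, Finset.sum_eq_single j, map_smul, smul_eq_mul] at h
  · exact mul_ne_zero hj.2 (ell_normal h0 hΔ hε j.1 j.2) h
  · intro b hb hbj
    rw [map_smul, smul_eq_mul]
    by_contra hcb
    have hm := hmax b (Finset.mem_filter.2 ⟨hb, left_ne_zero_of_mul hcb⟩)
    rw [Prod.Lex.toLex_le_toLex] at hm
    simp only at hm
    have hkill := mt (ell_kill h0 hΔ ε j.1 b.1) (right_ne_zero_of_mul hcb)
    have hp := ell_perm h0 hΔ ε j.1 b.1 (by omega) (by omega) (right_ne_zero_of_mul hcb)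
    exact hbj (Subtype.ext (normal_unique b.2 j.2 hp))
  · intro hjs; exact absurd hj.1 hjs

end Independence

/-! ### Spanning by the normal words -/

section Spanning

variable {M N : ℕ} {A : Type} [Ring A] [Algebra ℂ A]

/-- The span of the words of loop degree at most `k`, where `t^a_b[n]` has loop degree `n`. -/
def Fl (τ : Fin (M + N) → Fin (M + N) → ℕ → A) (k : ℕ) : Submodule ℂ A :=
  Submodule.span ℂ {z | ∃ u : List (Gen M N), dg u + u.length ≤ k ∧ z = wd τ u}

variable {τ : Fin (M + N) → Fin (M + N) → ℕ → A}

lemma wd_mem_Fl {k : ℕ} (u : List (Gen M N)) (h : dg u + u.length ≤ k) : wd τ u ∈ Fl τ k :=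
  Submodule.subset_span ⟨u, h, rfl⟩

lemma Fl_mono {k l : ℕ} (h : k ≤ l) : Fl τ k ≤ Fl τ l :=
  Submodule.span_mono fun _ ⟨u, hu, e⟩ => ⟨u, hu.trans h, e⟩

lemma mul_mem_Fl {k l : ℕ} {x y : A} (hx : x ∈ Fl τ k) (hy : y ∈ Fl τ l) :
    x * y ∈ Fl τ (k + l) := by
  have h := Submodule.mul_mem_mul hx hy
  unfold Fl at h
  rw [Submodule.span_mul_span] at h
  refine Submodule.span_le.2 ?_ h
  rintro _ ⟨_, ⟨u, hu, rfl⟩, _, ⟨u', hu', rfl⟩, rfl⟩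
  simp only [← wd_append]
  refine wd_mem_Fl _ ?_
  simp only [dg_append, List.length_append]
  omega

lemma tau_mem_Fl (h0 : Unit0 τ) (a b : Fin (M + N)) (r : ℕ) : τ a b r ∈ Fl τ r := by
  cases r with
  | zero =>
    rw [h0]
    split_ifs
    · exact Submodule.smul_mem _ _ (wd_mem_Fl [] (by simp))
    · exact zero_mem _
  | succ r =>
    have : τ a b (r + 1) = wd τ [(a, b, r)] := by simp
    rw [this]
    exact wd_mem_Fl _ (by simp)

/-- Letters supercommute up to words of smaller loop degree. -/
lemma swap_mem_Fl (hx : RTT τ) (h0 : Unit0 τ) (v w : List (Gen M N)) (x y : Gen M N) {k : ℕ}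
    (hk : dg (v ++ x :: y :: w) + (v ++ x :: y :: w).length ≤ k + 1) :
    wd τ (v ++ x :: y :: w) - sgn1 M x.1 x.2.1 y.1 y.2.1 • wd τ (v ++ y :: x :: w) ∈ Fl τ k := by
  have e : wd τ (v ++ x :: y :: w) - sgn1 M x.1 x.2.1 y.1 y.2.1 • wd τ (v ++ y :: x :: w) =
      wd τ v * qb τ x.1 x.2.1 y.1 y.2.1 (x.2.2 + 1) (y.2.2 + 1) * wd τ w := by
    simp only [wd_append, wd_cons, qb, mul_sub, sub_mul, mul_smul_comm, smul_mul_assoc, mul_assoc]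
  simp only [dg_append, dg_cons, List.length_append, List.length_cons] at hk
  have hq : qb τ x.1 x.2.1 y.1 y.2.1 (x.2.2 + 1) (y.2.2 + 1) ∈ Fl τ (x.2.2 + y.2.2 + 1) := by
    rw [hx.qb_eq h0]
    refine Submodule.smul_mem _ _ (Submodule.sum_mem _ fun r hr => ?_)
    have hr' := Finset.mem_range.1 hr
    refine sub_mem (Fl_mono ?_ (mul_mem_Fl (tau_mem_Fl h0 _ _ _) (tau_mem_Fl h0 _ _ _)))
      (Fl_mono ?_ (mul_mem_Fl (tau_mem_Fl h0 _ _ _) (tau_mem_Fl h0 _ _ _))) <;> omega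
  rw [e]
  exact Fl_mono (by omega) (mul_mem_Fl (mul_mem_Fl (wd_mem_Fl v le_rfl) hq) (wd_mem_Fl w le_rfl))

/-- Modulo a subspace containing the words of smaller loop degree, the order of the letters
does not matter. -/
lemma perm_mem_iff (hx : RTT τ) (h0 : Unit0 τ) {S : Submodule ℂ A} {k : ℕ} (hS : Fl τ k ≤ S)
    {w₁ w₂ : List (Gen M N)} (hp : w₁.Perm w₂) (v : List (Gen M N))
    (hk : dg (v ++ w₁) + (v ++ w₁).length ≤ k + 1) :
    wd τ (v ++ w₁) ∈ S ↔ wd τ (v ++ w₂) ∈ S := by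
  induction hp generalizing v with
  | nil => rfl
  | cons x _ ih => simpa using ih (v ++ [x]) (by simpa using hk)
  | swap x y l =>
    have h := hS (swap_mem_Fl hx h0 v l y x hk)
    have hs : sgn1 M y.1 y.2.1 x.1 x.2.1 ≠ 0 := pow_ne_zero _ (by norm_num)
    rw [← Submodule.smul_mem_iff S (x := wd τ (v ++ x :: y :: l)) hs]
    exact ⟨fun h' => (Submodule.sub_mem_iff_right S h').1 h,
      fun h' => (Submodule.sub_mem_iff_left S h').1 h⟩
  | trans h1 h2 ih1 ih2 =>
    have hd := dg_perm (h1.append_left v)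
    have hl := (h1.append_left v).length_eq
    exact (ih1 v hk).trans (ih2 v (by omega))

/-- Every word is a combination of normal words, by induction on the loop degree. -/
lemma wd_mem_span_normal (hx : RTT τ) (h0 : Unit0 τ) {ky : Gen M N → ℕ}
    (hky : Function.Injective ky) (k : ℕ) (w : List (Gen M N)) (hk : dg w + w.length ≤ k) :
    wd τ w ∈ Submodule.span ℂ
      (Set.range fun w : {w : List (Gen M N) // w.Pairwise (Rn ky)} => wd τ w.1) := by
  induction k generalizing w with
  | zero =>
    obtain rfl : w = [] := List.length_eq_zero_iff.1 (by omega)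
    exact Submodule.subset_span ⟨⟨[], List.Pairwise.nil⟩, rfl⟩
  | succ k ih =>
    set S := Submodule.span ℂ
      (Set.range fun w : {w : List (Gen M N) // w.Pairwise (Rn ky)} => wd τ w.1) with hSdef
    have hS : Fl τ k ≤ S := by
      refine Submodule.span_le.2 ?_
      rintro _ ⟨u, hu, rfl⟩
      exact ih u hu
    have hmove : ∀ w', w.Perm w' → wd τ w' ∈ S → wd τ w ∈ S := fun w' hp h =>
      (perm_mem_iff hx h0 hS hp [] hk).2 h
    by_cases hw : w.Pairwise fun x y => x = y → Even (gp x)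
    · have hp := List.mergeSort_perm w fun a b => decide (ky a ≤ ky b)
      refine hmove _ hp.symm (Submodule.subset_span ⟨⟨_, ?_⟩, rfl⟩)
      have h1 := List.pairwise_mergeSort (le := fun a b => decide (ky a ≤ ky b))
        (by intro a b c; simpa using le_trans) (by intro a b; simpa using le_total _ _) w
      have h2 : (w.mergeSort fun a b => decide (ky a ≤ ky b)).Pairwise
          fun x y => x = y → Even (gp x) :=
        (hp.pairwise_iff (fun {x y} h e => by subst e; exact h rfl)).2 hw
      refine (h1.and h2).imp ?_
      rintro a b ⟨hab, he⟩
      have hab' : ky a ≤ ky b := by simpa using hab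
      rcases hab'.lt_or_eq with h | h
      · exact Or.inl h
      · exact Or.inr ⟨hky h, he (hky h)⟩
    · rw [List.pairwise_iff_forall_sublist] at hw
      push Not at hw
      obtain ⟨x, _, hsub, rfl, hodd⟩ := hw
      obtain ⟨l, hl⟩ := hsub.exists_perm_append
      have hd := dg_perm hl
      have hlen := hl.length_eq
      refine hmove _ hl ?_
      have h := hS (swap_mem_Fl hx h0 [] l x x (k := k)
        (by simp only [List.nil_append, List.cons_append] at *; omega))
      -- An odd letter anticommutes with itself, so its square has smaller loop degree.
      have hs : sgn1 M x.1 x.2.1 x.1 x.2.1 = -1 := by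
        unfold gp at hodd
        rw [Nat.not_even_iff_odd] at hodd
        exact (hodd.mul hodd).neg_one_pow
      rw [hs, neg_one_smul, sub_neg_eq_add, ← two_smul ℂ] at h
      exact (Submodule.smul_mem_iff S two_ne_zero).1 h

lemma span_normal (hτ : IsYangian M N A τ) {ky : Gen M N → ℕ} (hky : Function.Injective ky) :
    Submodule.span ℂ
      (Set.range fun w : {w : List (Gen M N) // w.Pairwise (Rn ky)} => wd τ w.1) = ⊤ := by
  rw [eq_top_iff, ← Algebra.top_toSubmodule, ← hτ.gen, Algebra.adjoin_eq_span]
  refine Submodule.span_le.2 fun z hz => ?_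
  obtain ⟨w, rfl⟩ : ∃ w, z = wd τ w := by
    induction hz using Submonoid.closure_induction with
    | mem x hx =>
      obtain ⟨g, rfl⟩ := hx
      exact ⟨[g], by simp⟩
    | one => exact ⟨[], rfl⟩
    | mul x y _ _ hx hy =>
      obtain ⟨v, rfl⟩ := hx
      obtain ⟨w, rfl⟩ := hy
      exact ⟨v ++ w, (wd_append τ v w).symm⟩
  exact wd_mem_span_normal hτ.rtt hτ.unit0 hky _ w le_rfl

end Spanning

/-! ### Embeddings of super Yangians -/

section Embedding

variable {M' N' : ℕ} {M N : ℕ}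

/-- A parity-preserving injection of index sets induces an embedding of super Yangians. -/
lemma exists_embedding {A' A : Type} [Ring A'] [Algebra ℂ A'] [Ring A] [Algebra ℂ A]
    {τ' : Fin (M' + N') → Fin (M' + N') → ℕ → A'} {τ : Fin (M + N) → Fin (M + N) → ℕ → A}
    (hτ' : IsYangian M' N' A' τ') (hτ : IsYangian M N A τ)
    (e : Fin (M' + N') → Fin (M + N)) (he : Function.Injective e)
    (hpa : ∀ a, pa M (e a) = pa M' a) :
    ∃ h : A' →ₐ[ℂ] A, Function.Injective h ∧ ∀ a b n, h (τ' a b n) = τ (e a) (e b) n := by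
  have hrtt : RTT fun a b n => τ (e a) (e b) n := by
    intro a1 b1 a2 b2 m n
    have := hτ.rtt (e a1) (e b1) (e a2) (e b2) m n
    simpa only [qb, xb, sgn1, sgn2, hpa] using this
  have hunit : Unit0 fun a b n => τ (e a) (e b) n := by
    intro a b
    simp only [hτ.unit0 (e a) (e b), he.eq_iff, eps, hpa]
  obtain ⟨h, hh⟩ := hτ'.lift A (fun a b n => τ (e a) (e b) n) hrtt hunit
  refine ⟨h, ?_, hh⟩
  let em : Gen M' N' → Gen M N := fun g => (e g.1, e g.2.1, g.2.2)
  have hem : Function.Injective em := by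
    rintro ⟨a, b, d⟩ ⟨a', b', d'⟩ h
    simp only [em, Prod.mk.injEq] at h
    rw [he h.1, he h.2.1, h.2.2]
  -- Any injection into `ℕ` serves as the order of the letters; its pullback along `em` makes `em`
  -- preserve normal words.
  let ky : Gen M N → ℕ := Encodable.encode
  have hky : Function.Injective (ky ∘ em) := Encodable.encode_injective.comp hem
  have hwd : ∀ w, h (wd τ' w) = wd τ (w.map em) := by
    intro w
    induction w with
    | nil => simp
    | cons g w ih => simp [ih, hh, em]
  have hgp : ∀ g, gp (em g) = gp g := fun g => by simp [gp, em, hpa]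
  have hnorm : ∀ w : List (Gen M' N'), w.Pairwise (Rn (ky ∘ em)) →
      (w.map em).Pairwise (Rn ky) := by
    intro w hw
    refine List.pairwise_map.2 (hw.imp ?_)
    rintro a b (h1 | ⟨rfl, h1⟩)
    · exact Or.inl h1
    · exact Or.inr ⟨rfl, by rwa [hgp]⟩
  have hli := (normal_linearIndependent hτ ky).comp
    (fun w : {w : List (Gen M' N') // w.Pairwise (Rn (ky ∘ em))} =>
      (⟨w.1.map em, hnorm w.1 w.2⟩ : {w : List (Gen M N) // w.Pairwise (Rn ky)})) (by
      intro v w hvw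
      exact Subtype.ext (List.map_injective_iff.2 hem (congrArg Subtype.val hvw)))
  rw [injective_iff_map_eq_zero]
  intro z hz
  have hzs : z ∈ Submodule.span ℂ (Set.range fun w :
      {w : List (Gen M' N') // w.Pairwise (Rn (ky ∘ em))} => wd τ' w.1) := by
    rw [span_normal hτ' hky]; trivial
  obtain ⟨c, rfl⟩ := Finsupp.mem_span_range_iff_exists_finsupp.1 hzs
  have hc : c = 0 := by
    refine (linearIndependent_iff.1 hli) c ?_
    rw [Finsupp.linearCombination_apply, ← hz, Finsupp.sum, Finsupp.sum, map_sum]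
    refine Finset.sum_congr rfl fun w _ => ?_
    rw [map_smul, hwd]
    rfl
  rw [hc, Finsupp.sum_zero_index]

lemma exists_embedding_Y (e : Fin (M' + N') → Fin (M + N)) (he : Function.Injective e)
    (hpa : ∀ a, pa M (e a) = pa M' a) :
    ∃ h : Y M' N' →ₐ[ℂ] Y M N, Function.Injective h ∧
      ∀ a b n, 1 ≤ n → h (t M' N' a b n) = t M N (e a) (e b) n := by
  obtain ⟨h, hi, hh⟩ := exists_embedding isYangian_Y isYangian_Y e he hpa
  refine ⟨h, hi, fun a b n hn => ?_⟩
  rw [t_eq_ty a b hn, t_eq_ty _ _ hn]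
  exact hh a b n

end Embedding

/-- **Subalgebra embeddings** (for `M, N ≥ 1`):
(i) `Y(gl(M|0)) ↪ Y(gl(M|N))`, `t^i_j[n] ↦ t^i_j[n]`;
(ii) `Y(gl(0|N)) ↪ Y(gl(M|N))`, `t^μ_ν[n] ↦ t^{M+μ}_{M+ν}[n]`;
(iii) `Y(gl(1|1)) ↪ Y(gl(M|N))`, with the two indices of `Y(gl(1|1))` sent to `M, M+1`
(1-based), i.e. `M-1, M` (0-based). -/
theorem subalgebra_embeddings (M N : ℕ) (hM : 1 ≤ M) (hN : 1 ≤ N) :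
    (∃ h : Y M 0 →ₐ[ℂ] Y M N, Function.Injective h ∧
      ∀ (a b : Fin (M + 0)) (n : ℕ), 1 ≤ n →
        h (t M 0 a b n)
          = t M N ⟨(a : ℕ), by have := a.isLt; omega⟩ ⟨(b : ℕ), by have := b.isLt; omega⟩ n) ∧
    (∃ h : Y 0 N →ₐ[ℂ] Y M N, Function.Injective h ∧
      ∀ (a b : Fin (0 + N)) (n : ℕ), 1 ≤ n →
        h (t 0 N a b n)
          = t M N ⟨M + (a : ℕ), by have := a.isLt; omega⟩
              ⟨M + (b : ℕ), by have := b.isLt; omega⟩ n) ∧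
    (∃ h : Y 1 1 →ₐ[ℂ] Y M N, Function.Injective h ∧
      ∀ (a b : Fin (1 + 1)) (n : ℕ), 1 ≤ n →
        h (t 1 1 a b n)
          = t M N ⟨M - 1 + (a : ℕ), by have := a.isLt; omega⟩
              ⟨M - 1 + (b : ℕ), by have := b.isLt; omega⟩ n) := by
  refine ⟨?_, ?_, ?_⟩
  · refine exists_embedding_Y (M' := M) (N' := 0)
      (fun a => ⟨(a : ℕ), by have := a.isLt; omega⟩) (fun a b h => ?_) fun a => rfl
    simpa [Fin.ext_iff] using h
  · refine exists_embedding_Y (M' := 0) (N' := N)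
      (fun a => ⟨M + (a : ℕ), by have := a.isLt; omega⟩) (fun a b h => ?_) fun a => ?_
    · simpa [Fin.ext_iff] using h
    · simp [pa]
  · refine exists_embedding_Y (M' := 1) (N' := 1)
      (fun a => ⟨M - 1 + (a : ℕ), by have := a.isLt; omega⟩) (fun a b h => ?_) fun a => ?_
    · simpa [Fin.ext_iff] using h
    · simp only [pa]
      congr 1
      exact propext ⟨fun h => by omega, fun h => by omega⟩

end SY
end
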